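/- arXiv:1604.06930 — 3 statements merged into one kernel-verified Lean document; each statement's English description precedes it below -/
import Mathlib

section
/- Let G be a finite group, let U be a subgroup of G containing the commutator subgroup [G,G], let G'' denote the second derived subgroup [[G,G],[G,G]], and let π : G → G/G'' be the natural projection. Then G'' ≤ [U,U], the projection π induces an isomorphism U/[U,U] ≅ π(U)/[π(U),π(U)], and the transfer kernels correspond exactly: ker T_{G,U} = π⁻¹(ker T_{G/G'', π(U)}), equivalently π(ker T_{G,U}) = ker T_{G/G'', π(U)}. -/
/-!
Since `[G,G] ≤ U`, one has `G'' = [[G,G],[G,G]] ≤ [U,U]`. For any surjective homomorphism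
`f : G → Q` with `ker f ≤ [U,U]`, the map induced by `f` on abelianizations
`U/[U,U] → f(U)/[f(U),f(U)]` is bijective (`bijective_abelianizationMap`).

Because `ker f ≤ U`, the map `f` also induces a bijection of coset spaces `G/U ≃ Q/f(U)`, and it
carries a system of coset representatives to a system of coset representatives. Computing both
transfers with such matching systems gives `T_{Q,f(U)} ∘ f = f_* ∘ T_{G,U}`
(`artinTransfer_map_apply`), with `f_*` the isomorphism above. The claims about the kernels follow
from the injectivity of `f_*` and the surjectivity of `f`.
-/

instance {G : Type} [Group G] (n : ℕ) : (derivedSeries G n).Normal :=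
  derivedSeries_normal G n

/-- The Artin transfer `T_{G,U} : G → U/[U,U]` from `G` to the abelianization of a
subgroup `U` of finite index. -/
noncomputable def artinTransfer {G : Type} [Group G] (U : Subgroup G) [U.FiniteIndex] :
    G →* Abelianization U :=
  MonoidHom.transfer Abelianization.of

/-- The transfer computed with the coset representatives chosen by a section `s` of
`G → G ⧸ H`. -/
lemma transfer_eq_prod_section {G A : Type} [Group G] [CommGroup A] {H : Subgroup G}
    [H.FiniteIndex] [Fintype (G ⧸ H)] (φ : H →* A) (s : G ⧸ H → G)
    (hs : ∀ q, (s q : G ⧸ H) = q) (g : G)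
    (hmem : ∀ q, (s q)⁻¹ * (g * s (g⁻¹ • q)) ∈ H) :
    MonoidHom.transfer φ g = ∏ q, φ ⟨(s q)⁻¹ * (g * s (g⁻¹ • q)), hmem q⟩ := by
  rw [MonoidHom.transfer_def φ ⟨Set.range s, Subgroup.isComplement_range_left hs⟩ g]
  unfold Subgroup.leftTransversals.diff
  dsimp only
  rw [Subsingleton.elim H.fintypeQuotientOfFiniteIndex ‹Fintype (G ⧸ H)›]
  refine Fintype.prod_congr _ _ fun q => ?_
  congr 1
  apply Subtype.ext
  simp only [Subgroup.smul_apply_eq_smul_apply_inv_smul, smul_eq_mul,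
    Subgroup.IsComplement.leftQuotientEquiv_apply hs]

lemma section_mem {G : Type} [Group G] {H : Subgroup G} (s : G ⧸ H → G)
    (hs : ∀ q, (s q : G ⧸ H) = q) (g : G) (q : G ⧸ H) :
    (s q)⁻¹ * (g * s (g⁻¹ • q)) ∈ H := by
  rw [← QuotientGroup.eq, hs]
  change q = g • ((s (g⁻¹ • q) : G) : G ⧸ H)
  rw [hs, smul_inv_smul]

/-- The bijection `G ⧸ U ≃ Q ⧸ f(U)` of coset spaces induced by a surjective homomorphism whose
kernel is contained in `U`. -/
noncomputable def cosetEquivMap {G Q : Type} [Group G] [Group Q] (f : G →* Q)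
    (hf : Function.Surjective f) (U : Subgroup G) (hker : f.ker ≤ U) :
    G ⧸ U ≃ Q ⧸ U.map f :=
  Equiv.ofBijective
    (Quotient.map' f fun a b h => by
      rw [QuotientGroup.leftRel_apply] at h ⊢
      exact ⟨_, h, by simp⟩) <| by
    constructor
    · intro a b
      induction a using QuotientGroup.induction_on with | H a => ?_
      induction b using QuotientGroup.induction_on with | H b => ?_
      intro h
      have h' : ((f a : Q) : Q ⧸ U.map f) = (f b : Q) := h
      rw [QuotientGroup.eq, ← map_inv, ← map_mul, ← Subgroup.mem_comap,
        Subgroup.comap_map_eq_self hker] at h'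
      exact QuotientGroup.eq.2 h'
    · intro b
      induction b using QuotientGroup.induction_on with | H b => ?_
      obtain ⟨a, rfl⟩ := hf b
      exact ⟨(a : G ⧸ U), rfl⟩

lemma cosetEquivMap_coe {G Q : Type} [Group G] [Group Q] (f : G →* Q)
    (hf : Function.Surjective f) (U : Subgroup G) (hker : f.ker ≤ U) (a : G) :
    cosetEquivMap f hf U hker (a : G ⧸ U) = ((f a : Q) : Q ⧸ U.map f) := rfl

lemma cosetEquivMap_smul {G Q : Type} [Group G] [Group Q] (f : G →* Q)
    (hf : Function.Surjective f) (U : Subgroup G) (hker : f.ker ≤ U) (g : G) (q : G ⧸ U) :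
    cosetEquivMap f hf U hker (g • q) = f g • cosetEquivMap f hf U hker q := by
  induction q using QuotientGroup.induction_on with | H a => ?_
  change ((f (g * a) : Q) : Q ⧸ U.map f) = ((f g * f a : Q) : Q ⧸ U.map f)
  rw [map_mul]

/-- Naturality of the transfer: `T_{Q,f(U)} ∘ f = f_* ∘ T_{G,U}` when `f` is surjective with
kernel inside `U`. -/
lemma artinTransfer_map_apply {G Q : Type} [Group G] [Group Q] (f : G →* Q)
    (hf : Function.Surjective f) (U : Subgroup G) (hker : f.ker ≤ U) [U.FiniteIndex]
    [(U.map f).FiniteIndex] (g : G) :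
    artinTransfer (U.map f) (f g) =
      Abelianization.map (f.subgroupMap U) (artinTransfer U g) := by
  classical
  let := U.fintypeQuotientOfFiniteIndex
  let := (U.map f).fintypeQuotientOfFiniteIndex
  let e := cosetEquivMap f hf U hker
  let s : G ⧸ U → G := Quotient.out
  have hs : ∀ q, (s q : G ⧸ U) = q := Quotient.out_eq'
  -- The images under `f` of the representatives of `G ⧸ U` represent `Q ⧸ f(U)`.
  have hs' : ∀ q, ((f (s (e.symm q)) : Q) : Q ⧸ U.map f) = q := fun q => by
    rw [← cosetEquivMap_coe f hf U hker, hs]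
    exact e.apply_symm_apply q
  unfold artinTransfer
  rw [transfer_eq_prod_section _ s hs g (section_mem s hs g),
    transfer_eq_prod_section _ (fun q => f (s (e.symm q))) hs' (f g)
      (section_mem (fun q => f (s (e.symm q))) hs' (f g)), map_prod]
  refine (Fintype.prod_equiv e _ _ fun q => ?_).symm
  have he : e.symm ((f g)⁻¹ • e q) = g⁻¹ • q := by
    rw [Equiv.symm_apply_eq, ← map_inv]
    exact (cosetEquivMap_smul f hf U hker g⁻¹ q).symm
  rw [Abelianization.map_of]
  congr 1
  apply Subtype.ext
  simp [he]

/-- If `ker f ≤ [U,U]`, then `f` induces an isomorphism from the abelianization of `U` to that of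
its image. -/
lemma bijective_abelianizationMap {G Q : Type} [Group G] [Group Q] (f : G →* Q)
    (U : Subgroup G) (hker : f.ker ≤ ⁅U, U⁆) :
    Function.Bijective (Abelianization.map (f.subgroupMap U)) := by
  have hsurj := f.subgroupMap_surjective U
  constructor
  · rw [injective_iff_map_eq_one]
    intro a
    induction a using QuotientGroup.induction_on with | H u => ?_
    intro h
    have h1 : f.subgroupMap U u ∈ commutator (U.map f) := by
      rw [← Abelianization.ker_of]
      exact h
    rw [commutator_def, ← Subgroup.map_top_of_surjective _ hsurj, ← Subgroup.map_commutator,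
      ← commutator_def] at h1
    obtain ⟨c, hc, hcu⟩ := h1
    have h2 : ((u * c⁻¹ : U) : G) ∈ ⁅U, U⁆ := by
      apply hker
      have := congrArg Subtype.val hcu
      simp only [MonoidHom.subgroupMap_apply_coe] at this
      simp [MonoidHom.mem_ker, this]
    rw [← Subgroup.map_subtype_commutator] at h2
    obtain ⟨d, hd, hdu⟩ := h2
    have h3 : u * c⁻¹ ∈ commutator U := by
      rw [← Subtype.ext hdu]
      exact hd
    have h4 : u ∈ commutator U := by simpa using mul_mem h3 hc
    rw [← Abelianization.ker_of] at h4
    exact h4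
  · intro b
    induction b using QuotientGroup.induction_on with | H v => ?_
    obtain ⟨u, rfl⟩ := hsurj v
    exact ⟨Abelianization.of u, rfl⟩

/-- let `G` be a finite group, `U` a subgroup containing `[G,G]`,
`G'' = [[G,G],[G,G]]` the second derived subgroup and `π : G → G/G''` the natural projection.
Then `G'' ≤ [U,U]`, `π` induces an isomorphism `U/[U,U] ≅ π(U)/[π(U),π(U)]`, and the transfer
kernels correspond exactly: `ker T_{G,U} = π⁻¹(ker T_{G/G'',π(U)})`, equivalently
`π(ker T_{G,U}) = ker T_{G/G'',π(U)}`. -/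
theorem transfer_kernels_of_metabelianization {G : Type} [Group G] [Finite G]
    (U : Subgroup G) (hU : commutator G ≤ U) :
    derivedSeries G 2 ≤ ⁅U, U⁆ ∧
    (∃ e : Abelianization U ≃*
        Abelianization (U.map (QuotientGroup.mk' (derivedSeries G 2))),
      ∀ u : U, e (Abelianization.of u) =
        Abelianization.of (⟨QuotientGroup.mk' (derivedSeries G 2) u,
          Subgroup.mem_map_of_mem _ u.2⟩ : U.map (QuotientGroup.mk' (derivedSeries G 2)))) ∧
    (artinTransfer U).ker =
      ((artinTransfer (U.map (QuotientGroup.mk' (derivedSeries G 2)))).ker).comap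
        (QuotientGroup.mk' (derivedSeries G 2)) ∧
    ((artinTransfer U).ker).map (QuotientGroup.mk' (derivedSeries G 2)) =
      (artinTransfer (U.map (QuotientGroup.mk' (derivedSeries G 2)))).ker := by
  have hle : derivedSeries G 2 ≤ ⁅U, U⁆ := Subgroup.commutator_mono hU hU
  have hsurj := QuotientGroup.mk'_surjective (derivedSeries G 2)
  have hker : (QuotientGroup.mk' (derivedSeries G 2)).ker ≤ ⁅U, U⁆ := by
    rwa [QuotientGroup.ker_mk']
  have hbij := bijective_abelianizationMap _ U hker
  have hcomap : (artinTransfer U).ker =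
      ((artinTransfer (U.map (QuotientGroup.mk' (derivedSeries G 2)))).ker).comap
        (QuotientGroup.mk' (derivedSeries G 2)) := by
    ext g
    rw [Subgroup.mem_comap, MonoidHom.mem_ker, MonoidHom.mem_ker,
      artinTransfer_map_apply _ hsurj U (hker.trans (Subgroup.commutator_le_self U)),
      map_eq_one_iff _ hbij.1]
  refine ⟨hle, ⟨MulEquiv.ofBijective _ hbij, fun u => rfl⟩, hcomap, ?_⟩
  rw [hcomap, Subgroup.map_comap_eq_self_of_surjective hsurj]
end

section
/- Let 𝔊 be a finite metabelian 5-group with 𝔊/[𝔊,𝔊] ≅ (ℤ/5ℤ)², whose six index-5 subgroups can be enumerated M₁,…,M₆ so that M₁/[M₁,M₁] ≅ ℤ/25ℤ × (ℤ/5ℤ)³, M_i/[M_i,M_i] ≅ (ℤ/5ℤ)² for 2 ≤ i ≤ 6, the kernel of the Artin transfer T_{𝔊,M₁} equals M₁, and the kernel of T_{𝔊,M_i} equals 𝔊 for 2 ≤ i ≤ 6. Then the generator rank of 𝔊 is d₁𝔊 = dim_{𝔽₅} H¹(𝔊, 𝔽₅) = 2 and the relation rank of 𝔊 is d₂𝔊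 = dim_{𝔽₅} H²(𝔊, 𝔽₅) = 4, where 𝔽₅ carries the trivial 𝔊-action. -/
/-- A finite metabelian `5`-group `𝔊` with `𝔊/[𝔊,𝔊] ≅ (ℤ/5ℤ)²` (hence exactly six
subgroups `M₁,…,M₆` of index `5`), transfer target type `τ(𝔊) ~ ([25,5,5,5],[5,5]⁵)` and
transfer kernel type `κ(𝔊) ~ (1,0⁵)`: `ker T_{𝔊,M₁} = M₁` and `ker T_{𝔊,M_i} = 𝔊` for
`2 ≤ i ≤ 6`. -/
def HasArtinPattern (𝔊 : Type) [Group 𝔊] [Finite 𝔊] : Prop :=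
  IsPGroup 5 𝔊 ∧
  derivedSeries 𝔊 2 = ⊥ ∧
  Nonempty (Abelianization 𝔊 ≃* Multiplicative (ZMod 5 × ZMod 5)) ∧
  ∃ M : Fin 6 → Subgroup 𝔊,
    Function.Injective M ∧
    (∀ i, (M i).index = 5) ∧
    (∀ N : Subgroup 𝔊, N.index = 5 → ∃ i, N = M i) ∧
    Nonempty (Abelianization (M 0) ≃*
      Multiplicative (ZMod 25 × ZMod 5 × ZMod 5 × ZMod 5)) ∧
    (∀ i, i ≠ 0 → Nonempty (Abelianization (M i) ≃*
      Multiplicative (ZMod 5 × ZMod 5))) ∧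
    (artinTransfer (M 0)).ker = M 0 ∧
    (∀ i, i ≠ 0 → (artinTransfer (M i)).ker = ⊤)

namespace FiveTower

open scoped commutatorElement

/-! ### The four relators -/

/-- The four relators of the presentation
`⟨S, X | (XS)⁵ = S⁵, [X, X^S] = [X, X^{S²}] = 1, S⁵ = X⁵⟩`, evaluated at two elements of a group. -/
def relator {K : Type*} [Group K] (S X : K) : Fin 4 → K :=
  ![(X * S) ^ 5 * (S ^ 5)⁻¹, ⁅X, S * X * S⁻¹⁆, ⁅X, S ^ 2 * X * (S ^ 2)⁻¹⁆, S ^ 5 * (X ^ 5)⁻¹]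

lemma map_relator {K L : Type*} [Group K] [Group L] (φ : K →* L) (S X : K) (i : Fin 4) :
    φ (relator S X i) = relator (φ S) (φ X) i := by
  fin_cases i <;> simp [relator, map_commutatorElement]

/-- The relators lie in the Frattini subgroup: they die in abelian groups of exponent `5`. -/
lemma relator_eq_one_of_comm {K : Type*} [CommGroup K] (h5 : ∀ k : K, k ^ 5 = 1) (S X : K)
    (i : Fin 4) : relator S X i = 1 := by
  fin_cases i <;> simp [relator, h5]

section Normal

variable {K : Type*} [Group K] {S X : K}

/-- The conjugate `S^k X S^{-k}`. -/
def cj (S X : K) (k : ℤ) : K := S ^ k * X * (S ^ k)⁻¹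

lemma cj_shift (k l : ℤ) : S ^ l * cj S X k * (S ^ l)⁻¹ = cj S X (k + l) := by
  simp only [cj, add_comm k l, zpow_add]; group

lemma cj_commute_shift {k l : ℤ} (h : Commute (cj S X k) (cj S X l)) (m : ℤ) :
    Commute (cj S X (k + m)) (cj S X (l + m)) := by
  rw [← cj_shift, ← cj_shift]
  exact (Commute.conj_iff _).2 h

/-- The consequences of the relations for the conjugates `X_k = S^k X S^{-k}`: `X₀, …, X₃` commute
pairwise, the `X_k` are `5`-periodic in `k` and all have the fifth power `S⁵`,
`X₀X₁X₂X₃X₄ = 1`, and hence `S²⁵ = 1`. -/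
lemma relator_consequences (h : ∀ i, relator S X i = 1) :
    (∀ k l : ℤ, 0 ≤ k → k < 4 → 0 ≤ l → l < 4 → Commute (cj S X k) (cj S X l)) ∧
    (∀ k, cj S X (k + 5) = cj S X k) ∧
    (∀ k, cj S X k ^ 5 = S ^ 5) ∧
    cj S X 0 * cj S X 1 * cj S X 2 * cj S X 3 * cj S X 4 = 1 ∧ S ^ 25 = 1 := by
  have h0 := h 0
  have h1 := h 1
  have h2 := h 2
  have h3 := h 3
  simp only [relator, Matrix.cons_val] at h0 h1 h2 h3
  have h3' : S ^ 5 = X ^ 5 := mul_inv_eq_one.1 h3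
  have h01 : Commute (cj S X 0) (cj S X 1) := by
    have := commutatorElement_eq_one_iff_mul_comm.1 h1
    simpa [cj] using (show Commute _ _ from this)
  have h02 : Commute (cj S X 0) (cj S X 2) := by
    have := commutatorElement_eq_one_iff_mul_comm.1 h2
    have e : cj S X 2 = S ^ 2 * X * (S ^ 2)⁻¹ := by simp [cj]
    rw [e]
    simpa [cj] using (show Commute _ _ from this)
  have hprod : cj S X 0 * cj S X 1 * cj S X 2 * cj S X 3 * cj S X 4 = 1 := by
    rw [← h0]; simp only [cj, pow_succ (X * S), pow_zero]; group
  have h12 := cj_commute_shift h01 1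
  have h23 := cj_commute_shift h01 2
  have h13 := cj_commute_shift h02 1
  norm_num at h12 h23 h13
  have h14 : Commute (cj S X 1) (cj S X 4) := by
    rw [eq_inv_of_mul_eq_one_right hprod]
    exact (((h01.symm.mul_right (Commute.refl _)).mul_right h12).mul_right h13).inv_right
  have h03 := cj_commute_shift h14 (-1)
  norm_num at h03
  have hS : Commute (S ^ 5) X := by rw [h3']; exact (Commute.refl X).pow_left 5
  have hpow : ∀ k, cj S X k ^ 5 = S ^ 5 := by
    intro k
    rw [cj, conj_pow, ← h3']
    group
  have hper : ∀ k, cj S X (k + 5) = cj S X k := by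
    intro k
    have : S ^ (5 : ℤ) * X * (S ^ (5 : ℤ))⁻¹ = X := by
      have e : S ^ (5 : ℤ) = S ^ 5 := by norm_cast
      rw [e, hS.eq]; group
    conv_rhs => rw [cj, ← this]
    rw [cj, zpow_add]; group
  refine ⟨?_, hper, hpow, hprod, ?_⟩
  · intro k l hk hk' hl hl'
    interval_cases k <;> interval_cases l <;>
      first | exact Commute.refl _ | assumption | (apply Commute.symm; assumption)
  · have h4 := congrArg (· ^ 5) (eq_inv_of_mul_eq_one_left hprod)
    simp only [inv_pow] at h4
    rw [((h03.mul_left h13).mul_left h23).mul_pow, (h02.mul_left h12).mul_pow, h01.mul_pow,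
      hpow, hpow, hpow, hpow, hpow] at h4
    calc S ^ 25 = S ^ 5 * S ^ 5 * S ^ 5 * S ^ 5 * S ^ 5 := by group
      _ = 1 := by rw [h4]; group

/-- Elements of the form `X₀^a X₁^b X₂^c X₃^d`. -/
def nf (S X : K) (a b c d : ℤ) : K :=
  cj S X 0 ^ a * cj S X 1 ^ b * cj S X 2 ^ c * cj S X 3 ^ d

lemma nf_mul (h : ∀ i, relator S X i = 1) (a b c d a' b' c' d' : ℤ) :
    nf S X a b c d * nf S X a' b' c' d' = nf S X (a + a') (b + b') (c + c') (d + d') := by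
  have hc := (relator_consequences h).1
  have c1 : ∀ k l : ℤ, 0 ≤ k → k < 4 → 0 ≤ l → l < 4 → ∀ m n : ℤ,
    Commute (cj S X k ^ m) (cj S X l ^ n) := fun k l a b c d m n =>
      ((hc k l a b c d).zpow_left m).zpow_right n
  have c01 := c1 0 1 (by norm_num) (by norm_num) (by norm_num) (by norm_num)
  have c02 := c1 0 2 (by norm_num) (by norm_num) (by norm_num) (by norm_num)
  have c03 := c1 0 3 (by norm_num) (by norm_num) (by norm_num) (by norm_num)
  have c12 := c1 1 2 (by norm_num) (by norm_num) (by norm_num) (by norm_num)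
  have c13 := c1 1 3 (by norm_num) (by norm_num) (by norm_num) (by norm_num)
  have c23 := c1 2 3 (by norm_num) (by norm_num) (by norm_num) (by norm_num)
  simp only [nf]
  have mm : ∀ p q r s p' q' r' s' : K, Commute q p' → Commute r p' → Commute s p' →
      Commute r q' → Commute s q' → Commute s r' →
      p * q * r * s * (p' * q' * r' * s') = (p * p') * (q * q') * (r * r') * (s * s') := by
    intro p q r s p' q' r' s' h1 h2 h3 h4 h5 h6
    rw [(by group :
      p * q * r * s * (p' * q' * r' * s') = p * ((q * r * s) * p') * (q' * r' * s')),
      ((h1.mul_left h2).mul_left h3).eq,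
      (by group : p * (p' * (q * r * s)) * (q' * r' * s') =
        p * p' * q * ((r * s) * q') * (r' * s')), (h4.mul_left h5).eq,
      (by group : p * p' * q * (q' * (r * s)) * (r' * s') =
        p * p' * (q * q') * r * (s * r') * s'), h6.eq]
    group
  rw [mm _ _ _ _ _ _ _ _ (c01 _ _).symm (c02 _ _).symm (c03 _ _).symm (c12 _ _).symm
    (c13 _ _).symm (c23 _ _).symm, zpow_add, zpow_add, zpow_add, zpow_add]

lemma cj_eq_nf (h : ∀ i, relator S X i = 1) (k : ℤ) :
    ∃ a b c d, cj S X k = nf S X a b c d := by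
  obtain ⟨hc, hper, -, hprod, -⟩ := relator_consequences h
  have hmod : ∀ (n : ℕ) k, cj S X (k + 5 * n) = cj S X k := by
    intro n
    induction n with
    | zero => intro k; simp
    | succ n ih => intro k; rw [← ih k, ← hper (k + 5 * n)]; congr 1; push_cast; ring
  have hmod' : cj S X k = cj S X (k % 5) := by
    rcases le_or_gt 0 (k / 5) with h0 | h0
    · have := hmod (k / 5).toNat (k % 5)
      rw [← this]; congr 1; omega
    · have := hmod (-(k / 5)).toNat k
      rw [← this]; congr 1; omega
  rw [hmod']
  have l0 := Int.emod_nonneg k (by norm_num : (5 : ℤ) ≠ 0)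
  have l1 := Int.emod_lt_of_pos k (by norm_num : (0 : ℤ) < 5)
  generalize k % 5 = m at *
  interval_cases m
  · exact ⟨1, 0, 0, 0, by simp [nf]⟩
  · exact ⟨0, 1, 0, 0, by simp [nf]⟩
  · exact ⟨0, 0, 1, 0, by simp [nf]⟩
  · exact ⟨0, 0, 0, 1, by simp [nf]⟩
  · refine ⟨-1, -1, -1, -1, ?_⟩
    have h1 : nf S X 1 1 1 1 * nf S X (-1) (-1) (-1) (-1) = 1 := by
      rw [nf_mul h]; simp [nf]
    rw [eq_inv_of_mul_eq_one_right h1, eq_inv_of_mul_eq_one_right hprod]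
    simp [nf]

/-- Every element of a group generated by `S, X` subject to the relations has a normal form. -/
lemma exists_normal_form (h : ∀ i, relator S X i = 1) (hgen : Subgroup.closure {S, X} = ⊤)
    (g : K) : ∃ j a b c d : ℤ, g = S ^ j * nf S X a b c d := by
  have hX : ∀ (j a b c d k : ℤ), ∃ a' b' c' d' : ℤ, ∃ j' : ℤ,
      cj S X k * (S ^ j * nf S X a b c d) = S ^ j' * nf S X a' b' c' d' := by
    intro j a b c d k
    obtain ⟨a', b', c', d', e⟩ := cj_eq_nf h (k - j)
    refine ⟨a' + a, b' + b, c' + c, d' + d, j, ?_⟩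
    rw [← nf_mul h, ← e, (by ring : k = (k - j) + j), ← cj_shift]
    simp only [add_sub_cancel_right]
    group
  have hX' : ∀ (j a b c d k : ℤ), ∃ a' b' c' d' : ℤ, ∃ j' : ℤ,
      (cj S X k)⁻¹ * (S ^ j * nf S X a b c d) = S ^ j' * nf S X a' b' c' d' := by
    intro j a b c d k
    obtain ⟨a', b', c', d', e⟩ := cj_eq_nf h (k - j)
    refine ⟨-a' + a, -b' + b, -c' + c, -d' + d, j, ?_⟩
    have e' : (cj S X (k - j))⁻¹ = nf S X (-a') (-b') (-c') (-d') := by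
      rw [e, inv_eq_iff_mul_eq_one, nf_mul h]; simp [nf]
    rw [← nf_mul h, ← e', (by ring : k = (k - j) + j), ← cj_shift]
    simp only [add_sub_cancel_right]
    group
  have hg : g ∈ Subgroup.closure {S, X} := hgen ▸ Subgroup.mem_top g
  have hX0 : cj S X 0 = X := by simp [cj]
  induction hg using Subgroup.closure_induction_left with
  | one => exact ⟨0, 0, 0, 0, 0, by simp [nf]⟩
  | mul_left x hx y _ ih =>
    obtain ⟨j, a, b, c, d, rfl⟩ := ih
    rcases hx with rfl | hx
    · exact ⟨j + 1, a, b, c, d, by rw [add_comm, zpow_add]; group⟩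
    · obtain rfl : x = X := hx
      obtain ⟨a', b', c', d', j', e⟩ := hX j a b c d 0
      exact ⟨j', a', b', c', d', by rw [← e, hX0]⟩
  | inv_mul_cancel x hx y _ ih =>
    obtain ⟨j, a, b, c, d, rfl⟩ := ih
    rcases hx with rfl | hx
    · exact ⟨j - 1, a, b, c, d, by rw [sub_eq_add_neg, add_comm, zpow_add]; group⟩
    · obtain rfl : x = X := hx
      obtain ⟨a', b', c', d', j', e⟩ := hX' j a b c d 0
      exact ⟨j', a', b', c', d', by rw [← e, hX0]⟩

/-- A group generated by two elements subject to the four relations has order at most `5⁶`. -/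
lemma card_le_of_relator (h : ∀ i, relator S X i = 1) (hgen : Subgroup.closure {S, X} = ⊤) :
    Finite K ∧ Nat.card K ≤ 5 ^ 6 := by
  obtain ⟨hc, -, hpow, -, h25⟩ := relator_consequences h
  let F : Fin 5 × Fin 25 × Fin 5 × Fin 5 × Fin 5 → K := fun t =>
    S ^ (t.1 : ℤ) * nf S X (t.2.1 : ℤ) (t.2.2.1 : ℤ) (t.2.2.2.1 : ℤ) (t.2.2.2.2 : ℤ)
  have hF : Function.Surjective F := by
    intro g
    obtain ⟨j, a, b, c, d, rfl⟩ := exists_normal_form h hgen g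
    have hcen : ∀ m k : ℤ, cj S X k ^ (5 * m) = cj S X 0 ^ (5 * m) := by
      intro m k
      rw [zpow_mul, zpow_mul]
      have := hpow k
      have h' := hpow 0
      norm_cast
      rw [this, h']
    have hS5 : ∀ m : ℤ, S ^ (5 * m) = cj S X 0 ^ (5 * m) := by
      intro m
      rw [zpow_mul, zpow_mul]
      have h' := hpow 0
      norm_cast
      rw [h']
    have hx25 : ∀ m : ℤ, cj S X 0 ^ (25 * m) = 1 := by
      intro m
      have := hcen (5 * m) 0
      rw [(by ring : 25 * m = 5 * (5 * m)), ← hS5, (by ring : 5 * (5 * m) = 25 * m), zpow_mul]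
      norm_cast
      rw [h25, one_zpow]
    -- fifth powers of all generators are moved into the exponent of `X₀`
    have hr : ∀ j0 j1 a b0 b1 c0 c1 d0 d1 : ℤ,
        S ^ (j0 + 5 * j1) * nf S X a (b0 + 5 * b1) (c0 + 5 * c1) (d0 + 5 * d1) =
        S ^ j0 * nf S X (a + 5 * (j1 + b1 + c1 + d1)) b0 c0 d0 := by
      intro j0 j1 a b0 b1 c0 c1 d0 d1
      have e0 : S ^ (j0 + 5 * j1) = S ^ j0 * nf S X (5 * j1) 0 0 0 := by
        rw [zpow_add, hS5]; simp [nf]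
      have e1 : nf S X 0 (5 * b1) (5 * c1) (5 * d1) = nf S X (5 * b1 + 5 * c1 + 5 * d1) 0 0 0 := by
        simp only [nf, hcen]
        simp [zpow_add]
      have e2 : nf S X a (b0 + 5 * b1) (c0 + 5 * c1) (d0 + 5 * d1) =
          nf S X a b0 c0 d0 * nf S X 0 (5 * b1) (5 * c1) (5 * d1) := by
        rw [nf_mul h]; simp
      rw [e0, e2, e1, nf_mul h, mul_assoc, nf_mul h]
      congr 2 <;> ring
    have hr2 : ∀ a0 a1 b c d : ℤ, nf S X (a0 + 25 * a1) b c d = nf S X a0 b c d := by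
      intro a0 a1 b c d
      simp [nf, zpow_add, hx25]
    have key := hr (j % 5) (j / 5) a (b % 5) (b / 5) (c % 5) (c / 5) (d % 5) (d / 5)
    simp only [Int.emod_add_mul_ediv] at key
    set a' := a + 5 * (j / 5 + b / 5 + c / 5 + d / 5) with ha'
    rw [← Int.emod_add_mul_ediv a' 25, hr2] at key
    rw [key]
    have lt : ∀ k : ℤ, ∃ t : Fin 5, (t : ℤ) = k % 5 := fun k =>
      ⟨⟨(k % 5).toNat, by omega⟩, by simp; omega⟩
    have lt' : ∀ k : ℤ, ∃ t : Fin 25, (t : ℤ) = k % 25 := fun k =>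
      ⟨⟨(k % 25).toNat, by omega⟩, by simp; omega⟩
    obtain ⟨tj, hj⟩ := lt j
    obtain ⟨ta, hta⟩ := lt' a'
    obtain ⟨tb, hb⟩ := lt b
    obtain ⟨tc, hcc⟩ := lt c
    obtain ⟨td, hd⟩ := lt d
    exact ⟨(tj, ta, tb, tc, td), by simp only [F, hj, hta, hb, hcc, hd]⟩
  have hfin : Finite K := Finite.of_surjective F hF
  refine ⟨hfin, (Nat.card_le_card_of_surjective F hF).trans ?_⟩
  simp

end Normal

/-- If `G` has order `5⁶` and is generated by `s, x` subject to the relations, then these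
relations present `G`: any `S, X` in a group `K` satisfying them define a homomorphism. The
map is read off from the subgroup of `G × K` generated by `(s, S)` and `(x, X)`, which is too
small not to be a graph. -/
lemma exists_hom_of_relator {G : Type*} [Group G] [Finite G] {s x : G}
    (hcard : Nat.card G = 5 ^ 6) (hgen : Subgroup.closure {s, x} = ⊤)
    (hrel : ∀ i, relator s x i = 1) {K : Type*} [Group K] {S X : K}
    (hSX : ∀ i, relator S X i = 1) : ∃ φ : G →* K, φ s = S ∧ φ x = X := by
  let H : Subgroup (G × K) := Subgroup.closure {(s, S), (x, X)}
  have hs : (s, S) ∈ H := Subgroup.subset_closure (by simp)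
  have hx : (x, X) ∈ H := Subgroup.subset_closure (by simp)
  let s' : H := ⟨(s, S), hs⟩
  let x' : H := ⟨(x, X), hx⟩
  have hgen' : Subgroup.closure {s', x'} = (⊤ : Subgroup H) := by
    have := Subgroup.closure_closure_coe_preimage (k := {(s, S), (x, X)})
    rw [← this]
    congr 1
    ext ⟨t, ht⟩
    simp [s', x', Subtype.ext_iff]
  have hrel' : ∀ i, relator s' x' i = 1 := by
    intro i
    apply Subtype.ext
    apply Prod.ext
    · have := map_relator ((MonoidHom.fst G K).comp H.subtype) s' x' i
      exact this.trans (hrel i)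
    · have := map_relator ((MonoidHom.snd G K).comp H.subtype) s' x' i
      exact this.trans (hSX i)
  obtain ⟨hfin, hle⟩ := card_le_of_relator hrel' hgen'
  let π : H →* G := (MonoidHom.fst G K).comp H.subtype
  have hsurj : Function.Surjective π := by
    rw [← MonoidHom.range_eq_top, eq_top_iff, ← hgen, Subgroup.closure_le]
    rintro g (rfl | hg)
    · exact ⟨s', rfl⟩
    · exact ⟨x', hg.symm⟩
  have hbij : Function.Bijective π :=
    hsurj.bijective_of_nat_card_le (by rw [hcard]; exact hle)
  let e : H ≃* G := MulEquiv.ofBijective π hbij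
  refine ⟨((MonoidHom.snd G K).comp H.subtype).comp e.symm.toMonoidHom, ?_, ?_⟩
  · have : e.symm s = s' := (MulEquiv.symm_apply_eq e).2 rfl
    simp [this, s']
  · have : e.symm x = x' := (MulEquiv.symm_apply_eq e).2 rfl
    simp [this, x']

/-! ### Central extensions -/

/-- The `2`-cocycle condition for trivial coefficients, in curried form. -/
def IsCoc {W M : Type*} [Group W] [AddCommGroup M] (f : W → W → M) : Prop :=
  ∀ g h j, f (g * h) j + f g h = f h j + f g (h * j)

/-- The central extension of `W` by `M` defined by a (not necessarily normalized) `2`-cocycle `f`: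
the set `W × M` with `(g, m)(h, n) = (gh, m + n + f(g, h))`. -/
@[ext]
structure CExt {W M : Type*} [Group W] [AddCommGroup M] (f : W → W → M) (hf : IsCoc f) where
  fst : W
  snd : M

namespace CExt

variable {W M : Type*} [Group W] [AddCommGroup M] {f : W → W → M} {hf : IsCoc f}

instance [DecidableEq W] [DecidableEq M] : DecidableEq (CExt f hf) := fun a b =>
  decidable_of_iff (a.fst = b.fst ∧ a.snd = b.snd) CExt.ext_iff.symm

instance : Mul (CExt f hf) := ⟨fun a b => ⟨a.fst * b.fst, a.snd + b.snd + f a.fst b.fst⟩⟩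

instance : One (CExt f hf) := ⟨⟨1, -f 1 1⟩⟩

instance : Inv (CExt f hf) :=
  ⟨fun a => ⟨a.fst⁻¹, -a.snd - f a.fst⁻¹ a.fst - f 1 1⟩⟩

@[simp] lemma mul_fst (a b : CExt f hf) : (a * b).fst = a.fst * b.fst := rfl
@[simp] lemma mul_snd (a b : CExt f hf) :
    (a * b).snd = a.snd + b.snd + f a.fst b.fst := rfl
@[simp] lemma one_fst : (1 : CExt f hf).fst = 1 := rfl
@[simp] lemma one_snd : (1 : CExt f hf).snd = -f 1 1 := rfl
@[simp] lemma inv_fst (a : CExt f hf) : (a⁻¹).fst = a.fst⁻¹ := rfl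
@[simp] lemma inv_snd (a : CExt f hf) :
    (a⁻¹).snd = -a.snd - f a.fst⁻¹ a.fst - f 1 1 := rfl

lemma one_left (hf : IsCoc f) (g : W) : f 1 g = f 1 1 := by
  have := hf 1 1 g
  simp only [one_mul] at this
  exact (add_left_cancel this).symm

instance : Group (CExt f hf) :=
  Group.ofLeftAxioms
    (fun a b c => by
      ext
      · simp [mul_assoc]
      · simp only [mul_snd, mul_fst]
        have := hf a.fst b.fst c.fst
        calc a.snd + b.snd + f a.fst b.fst + c.snd + f (a.fst * b.fst) c.fst
            = a.snd + b.snd + c.snd + (f (a.fst * b.fst) c.fst + f a.fst b.fst) := by abel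
          _ = _ := by rw [this]; abel)
    (fun a => by
      ext
      · simp
      · simp [one_left hf])
    (fun a => by
      ext
      · simp
      · simp only [mul_snd, inv_snd, inv_fst, one_snd]
        abel)

/-- The projection onto the quotient. -/
def proj : CExt f hf →* W where
  toFun := fst
  map_one' := rfl
  map_mul' _ _ := rfl

/-- A compatible pair of homomorphisms of quotients and of kernels induces a homomorphism of
central extensions. -/
def map {W' M' : Type*} [Group W'] [AddCommGroup M'] {f' : W' → W' → M'} {hf' : IsCoc f'}
    (ρ : W →* W') (μ : M →+ M') (h : ∀ a b, f' (ρ a) (ρ b) = μ (f a b)) :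
    CExt f hf →* CExt f' hf' :=
  MonoidHom.mk' (fun a => ⟨ρ a.fst, μ a.snd⟩) (fun a b => by
    ext
    · simp
    · simp [h])

/-- A primitive `c` of the cocycle `f` yields a retraction of the central extension onto its
kernel. -/
def retraction (c : W → M) (h : ∀ a b, f a b = c b - c (a * b) + c a) :
    CExt f hf →* Multiplicative M :=
  MonoidHom.mk' (fun a => Multiplicative.ofAdd (a.snd + c a.fst)) (fun a b => by
    rw [← ofAdd_add]
    congr 1
    simp only [mul_snd, mul_fst, h]
    abel)

end CExt

/-! ### Evaluating relators on cocycles -/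

section Eval

open groupCohomology

variable (G : Type) [Group G]

/-- The space of `2`-cocycles of `G` with values in the trivial module `𝔽₅`. -/
abbrev Z2 : Type := cocycles₂ (Rep.trivial (ZMod 5) G (ZMod 5))

variable {G}

lemma Z2.isCoc (f : Z2 G) : IsCoc (fun g h => (f.1 (g, h) : ZMod 5)) := fun g h j =>
  (mem_cocycles₂_iff f.1).1 f.2 g h j

/-- The universal cocycle, with values in the dual of the space of cocycles. -/
def univCoc (g h : G) : Module.Dual (ZMod 5) (Z2 G) where
  toFun f := f.1 (g, h)
  map_add' _ _ := rfl
  map_smul' _ _ := rfl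

lemma univCoc_isCoc : IsCoc (univCoc (G := G)) := fun g h j =>
  LinearMap.ext fun f => Z2.isCoc f g h j

/-- The linear functionals on cocycles given by the relators: the `i`-th relator is evaluated
at `(s, 0)` and `(x, 0)` in the central extension defined by the cocycle. Working in the
extension defined by the universal cocycle makes the linearity in the cocycle evident. The
summand `univCoc 1 1` is there because the identity of `CExt f hf` is `(1, -f(1, 1))`. -/
noncomputable def relFun (s x : G) : Z2 G →ₗ[ZMod 5] (Fin 4 → ZMod 5) :=
  LinearMap.pi fun i =>
    (relator (⟨s, 0⟩ : CExt univCoc univCoc_isCoc) ⟨x, 0⟩ i).snd + univCoc 1 1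

/-- The value of a relator functional may be computed in any central extension from which the
cocycle is pulled back. -/
lemma relFun_apply {s x : G} {W : Type*} [Group W] {F : W → W → ZMod 5} (hF : IsCoc F)
    (ρ : G →* W) (f : Z2 G) (h : ∀ a b, F (ρ a) (ρ b) = f.1 (a, b)) (i : Fin 4) :
    relFun s x f i = (relator (⟨ρ s, 0⟩ : CExt F hF) ⟨ρ x, 0⟩ i).snd + F 1 1 := by
  have := map_relator (CExt.map (f := univCoc) (hf := univCoc_isCoc) (hf' := hF) ρ
    (LinearMap.applyₗ (R := ZMod 5) (M := Z2 G) (M₂ := ZMod 5) f).toAddMonoidHom h)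
    ⟨s, 0⟩ ⟨x, 0⟩ i
  have h2 := congrArg CExt.snd this
  have e : ∀ y : G, CExt.map (f := univCoc) (hf := univCoc_isCoc) (hf' := hF) ρ
    (LinearMap.applyₗ (R := ZMod 5) (M := Z2 G) (M₂ := ZMod 5) f).toAddMonoidHom h ⟨y, 0⟩
      = ⟨ρ y, 0⟩ := fun y => by
    apply CExt.ext
    · rfl
    · exact map_zero _
  rw [e, e] at h2
  rw [← h2]
  have h11 : F 1 1 = f.1 (1, 1) := by rw [← h 1 1, map_one]
  rw [h11]
  rfl

/-- The relator functionals vanish simultaneously exactly on the coboundaries: if they vanish on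
`f`, then the presentation of `G` splits the extension defined by `f`, while in a split extension
the relators, being in the Frattini subgroup, have trivial image in the kernel. -/
lemma relFun_eq_zero_iff [Finite G] {s x : G} (hcard : Nat.card G = 5 ^ 6)
    (hgen : Subgroup.closure {s, x} = ⊤) (hrel : ∀ i, relator s x i = 1) (f : Z2 G) :
    relFun s x f = 0 ↔ f.1 ∈ coboundaries₂ (Rep.trivial (ZMod 5) G (ZMod 5)) := by
  have hval := fun i => relFun_apply (s := s) (x := x) (Z2.isCoc f) (MonoidHom.id G) f
    (fun _ _ => rfl) i
  constructor
  · intro h0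
    have hSX : ∀ i, relator (⟨s, 0⟩ : CExt _ (Z2.isCoc f)) ⟨x, 0⟩ i = 1 := by
      intro i
      apply CExt.ext
      · have := map_relator (CExt.proj (hf := Z2.isCoc f)) ⟨s, 0⟩ ⟨x, 0⟩ i
        exact this.trans (hrel i)
      · have := hval i
        rw [h0] at this
        exact eq_neg_of_add_eq_zero_left this.symm
    obtain ⟨θ, hs, hx⟩ := exists_hom_of_relator hcard hgen hrel hSX
    have hθ : CExt.proj.comp θ = MonoidHom.id G := by
      refine MonoidHom.eq_of_eqOn_dense hgen ?_
      rintro g (rfl | hg)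
      · simp [hs, CExt.proj]
      · obtain rfl : g = x := hg
        simp [hx, CExt.proj]
    have hθ' : ∀ g, (θ g).fst = g := fun g => DFunLike.congr_fun hθ g
    refine ⟨fun g => (-(θ g).snd : ZMod 5), ?_⟩
    funext ⟨g, h⟩
    have := congrArg CExt.snd (map_mul θ g h)
    rw [CExt.mul_snd, hθ', hθ'] at this
    change (-(θ h).snd - -(θ (g * h)).snd + -(θ g).snd : ZMod 5) = f.1 (g, h)
    rw [this]
    ring
  · rintro ⟨c, hc⟩
    have hc' : ∀ a b, (f.1 (a, b) : ZMod 5) = (c b : ZMod 5) - c (a * b) + c a := by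
      intro a b
      rw [← hc]; rfl
    ext i
    rw [hval i]
    have := map_relator (CExt.retraction (hf := Z2.isCoc f) c hc') ⟨s, 0⟩ ⟨x, 0⟩ i
    rw [relator_eq_one_of_comm] at this
    · have h2 : (relator (⟨s, 0⟩ : CExt _ (Z2.isCoc f)) ⟨x, 0⟩ i).snd +
          (c (relator (⟨s, 0⟩ : CExt _ (Z2.isCoc f)) ⟨x, 0⟩ i).fst : ZMod 5) = 0 :=
        Multiplicative.ofAdd.injective this
      have h1 : (relator (⟨s, 0⟩ : CExt _ (Z2.isCoc f)) ⟨x, 0⟩ i).fst = 1 :=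
        (map_relator (CExt.proj (hf := Z2.isCoc f)) ⟨s, 0⟩ ⟨x, 0⟩ i).trans (hrel i)
      rw [h1] at h2
      have h3 : (f.1 (1, 1) : ZMod 5) = c 1 := by rw [hc']; simp
      exact (congrArg (_ + ·) h3).trans h2
    · intro k
      have : ∀ z : ZMod 5, 5 • z = 0 := by decide
      exact congrArg Multiplicative.ofAdd (this (Multiplicative.toAdd k))

/-- The inflation of a cocycle along a homomorphism. -/
def inflate {W : Type*} [Group W] {F : W → W → ZMod 5} (hF : IsCoc F) (ρ : G →* W) : Z2 G :=
  ⟨fun p => F (ρ p.1) (ρ p.2), (mem_cocycles₂_iff _).2 fun g h j => by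
    have := hF (ρ g) (ρ h) (ρ j)
    rw [← map_mul, ← map_mul] at this
    exact this⟩

lemma relFun_inflate {s x : G} {W : Type*} [Group W] {F : W → W → ZMod 5} (hF : IsCoc F)
    (ρ : G →* W) : relFun s x (inflate hF ρ) =
      fun i => (relator (⟨ρ s, 0⟩ : CExt F hF) ⟨ρ x, 0⟩ i).snd + F 1 1 :=
  funext fun i => relFun_apply hF ρ _ (fun _ _ => rfl) i

end Eval

/-! ### Four explicit cocycles -/

/-- The carry cocycle of `ℤ/25ℤ` as an extension of `ℤ/5ℤ` by itself. -/
def carry (a b : Multiplicative (ZMod 5)) : ZMod 5 :=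
  if 5 ≤ (Multiplicative.toAdd a).val + (Multiplicative.toAdd b).val then 1 else 0

lemma carry_isCoc : IsCoc carry := by
  have : ∀ g h j : ZMod 5, (if 5 ≤ (g + h).val + j.val then 1 else 0 : ZMod 5) +
      (if 5 ≤ g.val + h.val then 1 else 0) = (if 5 ≤ h.val + j.val then 1 else 0) +
      (if 5 ≤ g.val + (h + j).val then 1 else 0) := by decide
  exact fun g h j => this (Multiplicative.toAdd g) (Multiplicative.toAdd h) (Multiplicative.toAdd j)

/-- The semidirect product of `ℤ/5ℤ` with the space of binary cubics over `𝔽₅`, on which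
`i ∈ ℤ/5ℤ` acts by the unipotent substitution `U ↦ U + iV`. The entries `a, b, c, d` are the
coefficients of the cubic `aU³ + 3bU²V + 3cUV² + dV³`. -/
@[ext]
structure Cubic where
  a : ZMod 5
  b : ZMod 5
  c : ZMod 5
  d : ZMod 5
  i : ZMod 5

namespace Cubic

instance : DecidableEq Cubic := fun u v =>
  decidable_of_iff (u.a = v.a ∧ u.b = v.b ∧ u.c = v.c ∧ u.d = v.d ∧ u.i = v.i) Cubic.ext_iff.symm

instance : Mul Cubic := ⟨fun u v => ⟨u.a + v.a, u.b + (v.b + u.i * v.a),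
  u.c + (v.c + 2 * u.i * v.b + u.i ^ 2 * v.a),
  u.d + (v.d + 3 * u.i * v.c + 3 * u.i ^ 2 * v.b + u.i ^ 3 * v.a), u.i + v.i⟩⟩

instance : One Cubic := ⟨⟨0, 0, 0, 0, 0⟩⟩

instance : Inv Cubic := ⟨fun v => ⟨-v.a, -(v.b + (-v.i) * v.a),
  -(v.c + 2 * (-v.i) * v.b + (-v.i) ^ 2 * v.a),
  -(v.d + 3 * (-v.i) * v.c + 3 * (-v.i) ^ 2 * v.b + (-v.i) ^ 3 * v.a), -v.i⟩⟩

lemma mul_def (u v : Cubic) : u * v = ⟨u.a + v.a, u.b + (v.b + u.i * v.a),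
  u.c + (v.c + 2 * u.i * v.b + u.i ^ 2 * v.a),
  u.d + (v.d + 3 * u.i * v.c + 3 * u.i ^ 2 * v.b + u.i ^ 3 * v.a), u.i + v.i⟩ := rfl

lemma one_def : (1 : Cubic) = ⟨0, 0, 0, 0, 0⟩ := rfl

lemma inv_def (v : Cubic) : v⁻¹ = ⟨-v.a, -(v.b + (-v.i) * v.a),
  -(v.c + 2 * (-v.i) * v.b + (-v.i) ^ 2 * v.a),
  -(v.d + 3 * (-v.i) * v.c + 3 * (-v.i) ^ 2 * v.b + (-v.i) ^ 3 * v.a), -v.i⟩ := rfl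

instance : Group Cubic :=
  Group.ofLeftAxioms
    (fun u v w => by ext <;> simp only [mul_def] <;> ring)
    (fun u => by ext <;> simp only [mul_def, one_def] <;> ring)
    (fun u => by ext <;> simp only [mul_def, one_def, inv_def] <;> ring)

/-- The cup square of the tautological crossed homomorphism with respect to the invariant
alternating form `a₁b₂ - b₁a₂` of rank two. -/
def coc₂ (u v : Cubic) : ZMod 5 := u.a * (v.b + u.i * v.a) - u.b * v.a

/-- The cup square of the tautological crossed homomorphism with respect to the invariant
symplectic form `a₁d₂ - 3b₁c₂ + 3c₁b₂ - d₁a₂`. -/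
def coc₄ (u v : Cubic) : ZMod 5 :=
  u.a * (v.d + 3 * u.i * v.c + 3 * u.i ^ 2 * v.b + u.i ^ 3 * v.a) -
    3 * u.b * (v.c + 2 * u.i * v.b + u.i ^ 2 * v.a) + 3 * u.c * (v.b + u.i * v.a) - u.d * v.a

lemma coc₂_isCoc : IsCoc coc₂ := fun u v w => by
  simp only [coc₂, mul_def]; ring

lemma coc₄_isCoc : IsCoc coc₄ := fun u v w => by
  simp only [coc₄, mul_def]; ring

/-- The image of the generator `s`. -/
def gs : Cubic := ⟨0, 0, 0, 0, 1⟩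

/-- The image of the generator `x`. -/
def gx : Cubic := ⟨1, 0, 0, 0, 0⟩

lemma relator_gs_gx (i : Fin 4) : relator gs gx i = 1 := by
  revert i; decide

end Cubic

lemma pow_five_eq_one (k : Multiplicative (ZMod 5)) : k ^ 5 = 1 := by
  revert k; decide

/-! ### Cohomology of the presented group -/

section Ranks

open groupCohomology

variable {G : Type} [Group G] [Finite G] {s x : G}

/-- The four explicit cocycles, inflated to `G`, have linearly independent values. -/
lemma relFun_surjective (hcard : Nat.card G = 5 ^ 6)
    (hgen : Subgroup.closure {s, x} = ⊤) (hrel : ∀ i, relator s x i = 1) :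
    Function.Surjective (relFun s x) := by
  obtain ⟨ρ₁, hs₁, hx₁⟩ := exists_hom_of_relator hcard hgen hrel
    (relator_eq_one_of_comm pow_five_eq_one (Multiplicative.ofAdd 1) 1)
  obtain ⟨ρ₂, hs₂, hx₂⟩ := exists_hom_of_relator hcard hgen hrel
    (relator_eq_one_of_comm pow_five_eq_one 1 (Multiplicative.ofAdd 1))
  obtain ⟨ρ, hs, hx⟩ := exists_hom_of_relator hcard hgen hrel Cubic.relator_gs_gx
  have e₁ : relFun s x (inflate carry_isCoc ρ₁) = ![0, 0, 0, 1] := by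
    rw [relFun_inflate, hs₁, hx₁]; decide
  have e₂ : relFun s x (inflate carry_isCoc ρ₂) = ![1, 0, 0, -1] := by
    rw [relFun_inflate, hs₂, hx₂]; decide
  have e₃ : relFun s x (inflate Cubic.coc₂_isCoc ρ) = ![0, 2, 4, 0] := by
    rw [relFun_inflate, hs, hx]; decide
  have e₄ : relFun s x (inflate Cubic.coc₄_isCoc ρ) = ![1, 2, 1, 0] := by
    rw [relFun_inflate, hs, hx]; decide
  intro v
  -- the coefficients of `v` with respect to the basis formed by the four vectors above
  refine ⟨(v 3 + (v 0 - (4 * v 1 - 2 * v 2))) • inflate carry_isCoc ρ₁ +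
    (v 0 - (4 * v 1 - 2 * v 2)) • inflate carry_isCoc ρ₂ +
    (2 * v 2 - v 1) • inflate Cubic.coc₂_isCoc ρ +
    (4 * v 1 - 2 * v 2) • inflate Cubic.coc₄_isCoc ρ, ?_⟩
  rw [map_add, map_add, map_add, map_smul, map_smul, map_smul, map_smul, e₁, e₂, e₃, e₄]
  have h5 : (5 : ZMod 5) = 0 := by decide
  ext i
  fin_cases i
  · simp
  · simp; linear_combination v 1 * h5
  · simp; linear_combination v 2 * h5
  · simp; ring

lemma finrank_H2 (hcard : Nat.card G = 5 ^ 6)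
    (hgen : Subgroup.closure {s, x} = ⊤) (hrel : ∀ i, relator s x i = 1) :
    Module.finrank (ZMod 5)
      (groupCohomology (Rep.trivial (ZMod 5) G (ZMod 5)) 2) = 4 := by
  let A := Rep.trivial (ZMod 5) G (ZMod 5)
  have : Fact (Nat.Prime 5) := ⟨by norm_num⟩
  have : Finite (G × G → A) := inferInstanceAs (Finite (G × G → ZMod 5))
  have : Module.Finite (ZMod 5) (Z2 G) :=
    Module.Finite.of_finite (R := ZMod 5) (M := Z2 G)
  let π : Z2 G →ₗ[ZMod 5] groupCohomology A 2 := (H2π A).hom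
  have hπ : Function.Surjective π := (ModuleCat.epi_iff_surjective (H2π A)).1 inferInstance
  have hker : LinearMap.ker π = LinearMap.ker (relFun s x) := by
    ext f
    rw [LinearMap.mem_ker, LinearMap.mem_ker, relFun_eq_zero_iff hcard hgen hrel]
    exact H2π_eq_zero_iff f
  have h1 := LinearMap.finrank_range_add_finrank_ker π
  have h2 := LinearMap.finrank_range_add_finrank_ker (relFun s x)
  rw [LinearMap.range_eq_top.2 hπ, finrank_top, hker] at h1
  rw [LinearMap.range_eq_top.2 (relFun_surjective hcard hgen hrel), finrank_top,
    Module.finrank_fin_fun] at h2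
  change Module.finrank (ZMod 5) (groupCohomology A 2) = 4
  omega

lemma finrank_H1 (hcard : Nat.card G = 5 ^ 6)
    (hgen : Subgroup.closure {s, x} = ⊤) (hrel : ∀ i, relator s x i = 1) :
    Module.finrank (ZMod 5)
      (groupCohomology (Rep.trivial (ZMod 5) G (ZMod 5)) 1) = 2 := by
  let A := Rep.trivial (ZMod 5) G (ZMod 5)
  have : Fact (Nat.Prime 5) := ⟨by norm_num⟩
  rw [(H1IsoOfIsTrivial A).toLinearEquiv.finrank_eq]
  let ev : (Additive G →+ ZMod 5) →ₗ[ZMod 5] ZMod 5 × ZMod 5 :=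
    { toFun := fun φ => (φ (Additive.ofMul s), φ (Additive.ofMul x))
      map_add' := fun _ _ => rfl
      map_smul' := fun _ _ => rfl }
  have hbij : Function.Bijective ev := by
    constructor
    · intro φ ψ h
      have h' : AddMonoidHom.toMultiplicativeRight φ = AddMonoidHom.toMultiplicativeRight ψ := by
        refine MonoidHom.eq_of_eqOn_dense hgen ?_
        rintro g (rfl | hg)
        · exact congrArg Multiplicative.ofAdd (congrArg Prod.fst h)
        · obtain rfl : g = x := hg
          exact congrArg Multiplicative.ofAdd (congrArg Prod.snd h)
      exact AddMonoidHom.toMultiplicativeRight.injective h'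
    · rintro ⟨a, b⟩
      obtain ⟨ρ, hs, hx⟩ := exists_hom_of_relator hcard hgen hrel
        (relator_eq_one_of_comm pow_five_eq_one (Multiplicative.ofAdd a) (Multiplicative.ofAdd b))
      refine ⟨AddMonoidHom.toMultiplicativeRight.symm ρ, Prod.ext ?_ ?_⟩
      · exact congrArg Multiplicative.toAdd hs
      · exact congrArg Multiplicative.toAdd hx
  refine ((LinearEquiv.ofBijective ev hbij).finrank_eq).trans ?_
  rw [Module.finrank_prod, Module.finrank_self]

end Ranks

/-! ### The structure of a group with the given Artin pattern -/

/-- If `K = ⟨s⟩N` with `N` abelian and normal, then the commutator subgroup consists of the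
commutators `[s, n]` with `n ∈ N`, and counting the fibres of `n ↦ [s, n]` gives its order. -/
lemma card_commutator_mul {K : Type*} [Group K] [Finite K] (N : Subgroup K) [N.Normal]
    (hN : ∀ a ∈ N, ∀ b ∈ N, a * b = b * a) (s : K) (hs : Subgroup.zpowers s ⊔ N = ⊤) :
    (∀ g ∈ commutator K, ∃ n ∈ N, s * n * s⁻¹ * n⁻¹ = g) ∧
    Nat.card (commutator K) * Nat.card (N ⊓ Subgroup.centralizer {s} : Subgroup K) =
      Nat.card N := by
  have hconj : ∀ (k : K) (n : K), n ∈ N → k * n * k⁻¹ ∈ N := fun k n hn =>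
    Subgroup.Normal.conj_mem inferInstance n hn k
  have hδN : ∀ n ∈ N, s * n * s⁻¹ * n⁻¹ ∈ N := fun n hn =>
    N.mul_mem (hconj s n hn) (N.inv_mem hn)
  let δ : N →* K := MonoidHom.mk' (fun n => s * n * s⁻¹ * (n : K)⁻¹) (by
    rintro ⟨n, hn⟩ ⟨m, hm⟩
    have := hN _ (hδN m hm) _ (N.inv_mem hn)
    calc s * (n * m) * s⁻¹ * (n * m)⁻¹ = s * n * s⁻¹ * (s * m * s⁻¹ * m⁻¹ * n⁻¹) := by group
      _ = _ := by rw [this]; group)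
  have hδ : ∀ n : N, δ n = s * n * s⁻¹ * (n : K)⁻¹ := fun _ => rfl
  have hI : δ.range ≤ N := by
    rintro _ ⟨n, rfl⟩
    exact hδN n n.2
  have hnormal : δ.range.Normal := by
    rw [← Subgroup.normalizer_eq_top_iff, eq_top_iff, ← hs, sup_le_iff]
    constructor
    · rw [Subgroup.zpowers_le, Subgroup.mem_normalizer_iff]
      intro g
      constructor
      · rintro ⟨n, rfl⟩
        exact ⟨⟨s * n * s⁻¹, hconj s n n.2⟩, by simp only [hδ]; group⟩
      · rintro ⟨n, hn⟩
        refine ⟨⟨s⁻¹ * n * s, by simpa using hconj s⁻¹ n n.2⟩, ?_⟩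
        rw [hδ] at hn ⊢
        have : g = s⁻¹ * (s * g * s⁻¹) * s := by group
        rw [this, ← hn]
        group
    · intro n hn
      rw [Subgroup.mem_normalizer_iff]
      intro g
      constructor
      · intro hg
        rw [hN n hn g (hI hg)]
        simpa using hg
      · intro hg
        have hg' : g = n⁻¹ * (n * g * n⁻¹) * n := by group
        rw [hg', hN _ (N.inv_mem hn) _ (hI hg)]
        simpa using hg
  have hcomm : commutator K ≤ δ.range := by
    rw [← Subgroup.Normal.quotient_commutative_iff_commutator_le]
    -- the classes of `s` and of `N` are central in the quotient
    have hsN : ∀ n ∈ N, (s : K ⧸ δ.range) * (n : K) = (n : K) * (s : K) := by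
      intro n hn
      rw [← QuotientGroup.mk_mul, ← QuotientGroup.mk_mul, eq_comm, QuotientGroup.eq]
      refine ⟨⟨s⁻¹ * n⁻¹ * s, by simpa using hconj s⁻¹ _ (N.inv_mem hn)⟩⁻¹, ?_⟩
      rw [map_inv, hδ]
      have := hN n hn (s⁻¹ * n * s) (by simpa using hconj s⁻¹ n hn)
      have h' : (s⁻¹ * n⁻¹ * s) * n = n * (s⁻¹ * n⁻¹ * s) :=
        hN _ (by simpa using hconj s⁻¹ _ (N.inv_mem hn)) _ hn
      calc (s * (s⁻¹ * n⁻¹ * s) * s⁻¹ * (s⁻¹ * n⁻¹ * s)⁻¹)⁻¹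
          = (s⁻¹ * n⁻¹ * s) * n := by group
        _ = (n * s)⁻¹ * (s * n) := by group
    have hcs : (⊤ : Subgroup K) ≤
        (Subgroup.centralizer {(s : K ⧸ δ.range)}).comap (QuotientGroup.mk' δ.range) := by
      rw [← hs, sup_le_iff]
      constructor
      · rw [Subgroup.zpowers_le, Subgroup.mem_comap, Subgroup.mem_centralizer_singleton_iff]
        rfl
      · intro n hn
        rw [Subgroup.mem_comap, Subgroup.mem_centralizer_singleton_iff]
        exact (hsN n hn).symm
    have hcen : (⊤ : Subgroup K) ≤
        (Subgroup.center (K ⧸ δ.range)).comap (QuotientGroup.mk' δ.range) := by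
      rw [← hs, sup_le_iff]
      constructor
      · rw [Subgroup.zpowers_le, Subgroup.mem_comap, Subgroup.mem_center_iff]
        intro q
        induction q using QuotientGroup.induction_on with | H k => ?_
        exact Subgroup.mem_centralizer_singleton_iff.1 (hcs (Subgroup.mem_top k))
      · intro n hn
        have hcn : (⊤ : Subgroup K) ≤
            (Subgroup.centralizer {(n : K ⧸ δ.range)}).comap (QuotientGroup.mk' δ.range) := by
          rw [← hs, sup_le_iff]
          constructor
          · rw [Subgroup.zpowers_le, Subgroup.mem_comap, Subgroup.mem_centralizer_singleton_iff]
            exact hsN n hn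
          · intro m hm
            rw [Subgroup.mem_comap, Subgroup.mem_centralizer_singleton_iff]
            exact congrArg (QuotientGroup.mk (s := δ.range)) (hN m hm n hn)
        rw [Subgroup.mem_comap, Subgroup.mem_center_iff]
        intro q
        induction q using QuotientGroup.induction_on with | H k => ?_
        exact Subgroup.mem_centralizer_singleton_iff.1 (hcn (Subgroup.mem_top k))
    constructor
    constructor
    intro p q
    induction p using QuotientGroup.induction_on with | H k => ?_
    exact (Subgroup.mem_center_iff.1 (hcen (Subgroup.mem_top k)) q).symm
  have hle : δ.range ≤ commutator K := by
    rintro _ ⟨n, rfl⟩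
    exact Subgroup.commutator_mem_commutator (Subgroup.mem_top s) (Subgroup.mem_top (n : K))
  have heq : commutator K = δ.range := le_antisymm hcomm hle
  refine ⟨fun g hg => ?_, ?_⟩
  · obtain ⟨n, hn⟩ := hcomm hg
    exact ⟨n, n.2, hn⟩
  · have hk : δ.ker.map N.subtype = N ⊓ Subgroup.centralizer {s} := by
      ext g
      simp only [Subgroup.mem_map, MonoidHom.mem_ker, Subgroup.mem_inf,
        Subgroup.mem_centralizer_singleton_iff]
      constructor
      · rintro ⟨n, hn, rfl⟩
        refine ⟨n.2, ?_⟩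
        rw [hδ, mul_inv_eq_one, mul_inv_eq_iff_eq_mul] at hn
        exact hn.symm
      · rintro ⟨hg, h⟩
        refine ⟨⟨g, hg⟩, ?_, rfl⟩
        rw [hδ, mul_inv_eq_one, mul_inv_eq_iff_eq_mul]
        exact h.symm
    rw [heq, ← hk, Subgroup.card_map_of_injective N.subtype_injective,
      ← Nat.card_congr (QuotientGroup.quotientKerEquivRange δ).toEquiv]
    exact (Subgroup.card_eq_card_quotient_mul_card_subgroup δ.ker).symm

lemma zpowers_sup_eq_top {K : Type*} [Group K] [Finite K] (N : Subgroup K) (hN : N.index = 5)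
    {s : K} (hs : s ∉ N) : Subgroup.zpowers s ⊔ N = ⊤ := by
  have hd : (Subgroup.zpowers s ⊔ N).index ∣ 5 := hN ▸ Subgroup.index_dvd_of_le le_sup_right
  rcases (Nat.dvd_prime (by norm_num)).1 hd with h | h
  · exact Subgroup.index_eq_one.1 h
  · exfalso
    have h1 := Subgroup.card_mul_index N
    have h2 := Subgroup.card_mul_index (Subgroup.zpowers s ⊔ N)
    have heq : N = Subgroup.zpowers s ⊔ N :=
      Subgroup.eq_of_le_of_card_ge le_sup_right (by rw [hN] at h1; rw [h] at h2; omega)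
    exact hs (heq ▸ (le_sup_left : _ ≤ Subgroup.zpowers s ⊔ N) (Subgroup.mem_zpowers s))

lemma eq_of_le_of_card_five {K : Type*} [Group K] [Finite K] {H D : Subgroup K}
    (hD : Nat.card D = 5) (hle : H ≤ D) (hH : H ≠ ⊥) : H = D := by
  have hd : Nat.card H ∣ 5 := hD ▸ Subgroup.card_dvd_of_le hle
  rcases (Nat.dvd_prime (by norm_num)).1 hd with h | h
  · exact absurd (Subgroup.card_eq_one.1 h) hH
  · exact Subgroup.eq_of_le_of_card_ge hle (by rw [h, hD])

/-- A nontrivial normal subgroup of a finite `5`-group meets the center nontrivially. -/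
lemma inf_center_ne_bot {K : Type*} [Group K] [Finite K] (hK : IsPGroup 5 K) (N : Subgroup K)
    [N.Normal] (hN : N ≠ ⊥) : N ⊓ Subgroup.center K ≠ ⊥ := by
  have : Fact (Nat.Prime 5) := ⟨by norm_num⟩
  have hdvd : 5 ∣ Nat.card N := by
    obtain ⟨n, hn⟩ := (hK.to_subgroup N).exists_card_eq
    rcases n with _ | n
    · exact absurd (Subgroup.card_eq_one.1 (by simpa using hn)) hN
    · rw [hn]; exact dvd_pow_self 5 (Nat.succ_ne_zero n)
  obtain ⟨b, hb, hne⟩ :=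
    (hK.of_equiv ConjAct.toConjAct).exists_fixed_point_of_prime_dvd_card_of_fixed_point N hdvd
      (a := 1) (fun g => smul_one g)
  intro h
  apply hne
  have hmem : (b : K) ∈ N ⊓ Subgroup.center K := by
    refine ⟨b.2, Subgroup.mem_center_iff.2 fun g => ?_⟩
    have := congrArg Subtype.val (hb (ConjAct.toConjAct g))
    rw [ConjAct.Subgroup.val_conj_smul, ConjAct.toConjAct_smul] at this
    exact mul_inv_eq_iff_eq_mul.1 this
  rw [h, Subgroup.mem_bot] at hmem
  exact Subtype.ext hmem.symm

/-- For `g ∉ A` with `g⁵` central, the transfer to the normal subgroup `A` of index five is the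
fifth power. -/
lemma artinTransfer_eq_pow {G : Type} [Group G] [Finite G] (A : Subgroup G) [A.Normal]
    (hA : A.index = 5) {g : G} (hg : g ∉ A) (hc : g ^ 5 ∈ Subgroup.center G) :
    ∃ h : g ^ 5 ∈ A, artinTransfer A g = Abelianization.of ⟨g ^ 5, h⟩ := by
  have hp : Fact (Nat.Prime 5) := ⟨by norm_num⟩
  have hmem : g ^ 5 ∈ A := hA ▸ Subgroup.pow_index_mem A g
  have hord : orderOf (g : G ⧸ A) = 5 := by
    refine orderOf_eq_prime ?_ ?_
    · rw [← QuotientGroup.mk_pow]; exact (QuotientGroup.eq_one_iff _).2 hmem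
    · exact fun h => hg ((QuotientGroup.eq_one_iff _).1 h)
  refine ⟨hmem, ?_⟩
  have := MonoidHom.transfer_eq_pow (H := A) (Abelianization.of (G := A)) g (fun k g₀ hk => by
    have hk' : g ^ k ∈ A := by
      have := Subgroup.Normal.conj_mem (H := A) inferInstance _ hk g₀
      simpa [mul_assoc] using this
    have h5 : 5 ∣ k := by
      rw [← hord]
      apply orderOf_dvd_of_pow_eq_one
      rw [← QuotientGroup.mk_pow]
      exact (QuotientGroup.eq_one_iff _).2 hk'
    obtain ⟨m, rfl⟩ := h5
    have hm : g ^ (5 * m) ∈ Subgroup.center G := by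
      rw [pow_mul]; exact Subgroup.pow_mem _ hc m
    rw [mul_assoc, ← Subgroup.mem_center_iff.1 hm g₀]
    group)
  rw [artinTransfer, this]
  congr 1
  exact Subtype.ext (by simp only [hA])

lemma normal_of_index_five {G : Type} [Group G] [Finite G] (hG : IsPGroup 5 G) (A : Subgroup G)
    (hA : A.index = 5) : A.Normal ∧ commutator G ≤ A := by
  have hp : Fact (Nat.Prime 5) := ⟨by norm_num⟩
  have hn : A.Normal := by
    apply Subgroup.normal_of_index_eq_minFac_card
    obtain ⟨n, hn⟩ := hG.exists_card_eq
    have hd : A.index ∣ Nat.card G := Subgroup.index_dvd_card A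
    rw [hA, hn] at *
    have h0 : n ≠ 0 := by rintro rfl; norm_num at hd
    rw [Nat.Prime.pow_minFac (by norm_num) h0]
  refine ⟨hn, ?_⟩
  rw [← Subgroup.Normal.quotient_commutative_iff_commutator_le]
  have hc : IsCyclic (G ⧸ A) := isCyclic_of_prime_card (p := 5) hA
  let := IsCyclic.commGroup (α := G ⧸ A)
  exact ⟨⟨fun a b => mul_comm a b⟩⟩

lemma prod_pow_five_eq_one (k : Multiplicative (ZMod 5 × ZMod 5)) : k ^ 5 = 1 := by
  revert k; decide

lemma ofAdd_pow_five_ne_one :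
    (Multiplicative.ofAdd ((1, 0, 0, 0) : ZMod 25 × ZMod 5 × ZMod 5 × ZMod 5)) ^ 5 ≠ 1 := by
  decide

/-- The multiples of five in `ℤ/25 × (ℤ/5)³` form a cyclic group of order five, so that each
nonzero one of them generates all of them. -/
lemma five_smul_cyclic (u v : ZMod 25 × ZMod 5 × ZMod 5 × ZMod 5) (hu : 5 • u ≠ 0) :
    ∃ k : ℕ, 5 • v = k • (5 • u) := by
  have h25 : ∀ a b : ZMod 25, 5 • a ≠ 0 → ∃ k : Fin 5, 5 • b = (k : ℕ) • (5 • a) := by decide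
  have h5 : ∀ a : ZMod 5, 5 • a = 0 := by decide
  obtain ⟨u, u1, u2, u3⟩ := u
  obtain ⟨v, v1, v2, v3⟩ := v
  obtain ⟨k, hk⟩ := h25 u v (by
    intro h0; apply hu
    simp only [Prod.smul_mk, h0, h5]; rfl)
  refine ⟨k, ?_⟩
  simp only [Prod.smul_mk, hk, h5, smul_zero]

/-- A group with the given Artin pattern has order `5⁶` and is generated by two elements
satisfying the four relations. -/
lemma exists_generators {G : Type} [Group G] [Finite G] (h : HasArtinPattern G) :
    Nat.card G = 5 ^ 6 ∧ ∃ s x : G, Subgroup.closure {s, x} = ⊤ ∧ ∀ i, relator s x i = 1 := by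
  obtain ⟨hp, hmet, ⟨eG⟩, M, hinj, hidx, -, ⟨eA⟩, hB, hkerA, -⟩ := h
  obtain ⟨eB⟩ := hB 1 (by decide)
  have hprime : Fact (Nat.Prime 5) := ⟨by norm_num⟩
  have hAB : M 0 ≠ M 1 := fun h => by simpa using hinj h
  have hA5 := hidx 0
  have hB5 := hidx 1
  obtain ⟨hAn, hGA⟩ := normal_of_index_five hp _ hA5
  obtain ⟨hBn, hGB⟩ := normal_of_index_five hp _ hB5
  clear hinj hidx hB
  replace hkerA : (artinTransfer (M 0)).ker = M 0 := hkerA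
  generalize M 0 = A at *
  generalize M 1 = B at *
  -- orders of the commutator factor groups
  have hcG : (commutator G).index = 25 := by
    have := Nat.card_congr eG.toEquiv
    rw [Nat.card_congr (Multiplicative.toAdd), Nat.card_prod, Nat.card_zmod] at this
    exact this
  have hcB : (commutator B).index = 25 := by
    have := Nat.card_congr eB.toEquiv
    rw [Nat.card_congr (Multiplicative.toAdd), Nat.card_prod, Nat.card_zmod] at this
    exact this
  have hcA : (commutator A).index = 3125 := by
    have := Nat.card_congr eA.toEquiv
    rw [Nat.card_congr (Multiplicative.toAdd), Nat.card_prod, Nat.card_prod, Nat.card_prod,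
      Nat.card_zmod, Nat.card_zmod] at this
    exact this
  have hGab : ∀ a ∈ commutator G, ∀ b ∈ commutator G, a * b = b * a := by
    intro a ha b hb
    have h2 : ⁅commutator G, commutator G⁆ = ⊥ := by
      rw [← hmet, derivedSeries_succ, derivedSeries_one]
    have := Subgroup.commutator_mem_commutator ha hb
    rw [h2, Subgroup.mem_bot] at this
    exact commutatorElement_eq_one_iff_mul_comm.1 this
  have hpow : ∀ g : G, g ^ 5 ∈ commutator G := by
    intro g
    have : (Abelianization.of g) ^ 5 = 1 := eG.injective (by rw [map_pow, prod_pow_five_eq_one, map_one])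
    rw [← map_pow] at this
    exact (QuotientGroup.eq_one_iff _).1 this
  have cardA := Subgroup.card_mul_index A
  rw [hA5] at cardA
  have cardB := Subgroup.card_mul_index B
  rw [hB5] at cardB
  have cardG' := Subgroup.card_mul_index (commutator G)
  rw [hcG] at cardG'
  have hpos : 0 < Nat.card G := Nat.card_pos
  obtain ⟨s, hsB, hsA⟩ : ∃ s ∈ B, s ∉ A := by
    by_contra! hcon
    exact hAB (Subgroup.eq_of_le_of_card_ge hcon (by omega)).symm
  -- `s` centralizes exactly five elements of the commutator subgroup
  have hD : Nat.card (commutator G ⊓ Subgroup.centralizer {s} : Subgroup G) = 5 := by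
    have hN5 : ((commutator G).subgroupOf B).index = 5 := by
      have := Subgroup.relIndex_mul_index hGB
      rw [hcG, hB5] at this
      change (commutator G).relIndex B = 5
      omega
    have hs' : (⟨s, hsB⟩ : B) ∉ (commutator G).subgroupOf B := fun hm =>
      hsA (hGA (Subgroup.mem_subgroupOf.1 hm))
    have key := (card_commutator_mul ((commutator G).subgroupOf B)
      (fun a ha b hb => Subtype.ext (hGab a ha b hb)) ⟨s, hsB⟩
      (zpowers_sup_eq_top _ hN5 hs')).2
    have e1 : (commutator G).subgroupOf B ⊓ Subgroup.centralizer {(⟨s, hsB⟩ : B)} =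
        (commutator G ⊓ Subgroup.centralizer {s}).subgroupOf B := by
      ext g
      simp [Subgroup.mem_subgroupOf, Subgroup.mem_centralizer_singleton_iff, Subtype.ext_iff]
    rw [e1, Nat.card_congr (Subgroup.subgroupOfEquivOfLe (inf_le_left.trans hGB)).toEquiv] at key
    have c1 := Subgroup.card_mul_index (commutator B)
    rw [hcB] at c1
    have c2 := Subgroup.card_mul_index ((commutator G).subgroupOf B)
    rw [hN5] at c2
    have hpos' : 0 < Nat.card (commutator B) := Nat.card_pos
    have : Nat.card (commutator B) *
      Nat.card (commutator G ⊓ Subgroup.centralizer {s} : Subgroup G) =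
        Nat.card (commutator B) * 5 := by omega
    exact Nat.eq_of_mul_eq_mul_left hpos' this
  have hsD : s ^ 5 ∈ commutator G ⊓ Subgroup.centralizer {s} :=
    ⟨hpow s, Subgroup.mem_centralizer_singleton_iff.2 (by rw [← pow_succ, ← pow_succ'])⟩
  -- otherwise `[A, A]` would meet the center nontrivially, hence contain the group of order five
  -- just found, and with it `s⁵`; then `s` would be in the transfer kernel
  have hAbot : ⁅A, A⁆ = ⊥ := by
    by_contra hne
    have h1 := inf_center_ne_bot hp ⁅A, A⁆ hne
    have hle : ⁅A, A⁆ ⊓ Subgroup.center G ≤ commutator G ⊓ Subgroup.centralizer {s} :=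
      inf_le_inf (Subgroup.commutator_mono le_top le_top) (Subgroup.center_le_centralizer _)
    have heq := eq_of_le_of_card_five hD hle h1
    rw [← heq] at hsD
    obtain ⟨hm, ht⟩ := artinTransfer_eq_pow A hA5 hsA hsD.2
    apply hsA
    rw [← hkerA, MonoidHom.mem_ker, ht]
    have h2 := hsD.1
    rw [← Subgroup.map_subtype_commutator] at h2
    obtain ⟨y, hy, hys⟩ := h2
    have : y = ⟨s ^ 5, hm⟩ := Subtype.ext hys
    rw [← this]
    exact (QuotientGroup.eq_one_iff _).2 hy
  have hAab : ∀ a ∈ A, ∀ b ∈ A, a * b = b * a := by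
    intro a ha b hb
    have := Subgroup.commutator_mem_commutator ha hb
    rw [hAbot, Subgroup.mem_bot] at this
    exact commutatorElement_eq_one_iff_mul_comm.1 this
  have hcA' : commutator A = ⊥ := by
    have := Subgroup.map_subtype_commutator A
    rw [hAbot] at this
    exact (Subgroup.map_eq_bot_iff_of_injective _ A.subtype_injective).1 this
  rw [hcA', Subgroup.index_bot] at hcA
  have cardG : Nat.card G = 5 ^ 6 := by omega
  refine ⟨cardG, ?_⟩
  have hne : ∀ g, g ∉ A → g ^ 5 ≠ 1 := by
    intro g hg h1
    obtain ⟨hm, ht⟩ := artinTransfer_eq_pow A hA5 hg (by rw [h1]; exact Subgroup.one_mem _)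
    apply hg
    rw [← hkerA, MonoidHom.mem_ker, ht]
    have : (⟨g ^ 5, hm⟩ : A) = 1 := Subtype.ext h1
    rw [this, map_one]
  have hpowA : ∀ g : G, g ^ 5 ∈ A := fun g => hGA (hpow g)
  obtain ⟨hder, hcard⟩ := card_commutator_mul A hAab s (zpowers_sup_eq_top A hA5 hsA)
  have hC : Nat.card (A ⊓ Subgroup.centralizer {s} : Subgroup G) = 5 := by
    have h4 : Nat.card (commutator G) = 625 := by omega
    rw [h4, hcA] at hcard
    omega
  have hsC : s ^ 5 ∈ A ⊓ Subgroup.centralizer {s} := ⟨hpowA s, hsD.2⟩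
  have hcyc : ∀ p ∈ A, ∀ q ∈ A, p ^ 5 ≠ 1 → ∃ k : ℕ, q ^ 5 = (p ^ 5) ^ k := by
    have hinjA : Function.Injective (Abelianization.of (G := A)) := by
      rw [← MonoidHom.ker_eq_bot_iff, Abelianization.ker_of, hcA']
    let ε : A →* Multiplicative (ZMod 25 × ZMod 5 × ZMod 5 × ZMod 5) :=
      eA.toMonoidHom.comp Abelianization.of
    have hε : Function.Injective ε := eA.injective.comp hinjA
    intro p hpA q hqA hp1
    obtain ⟨k, hk⟩ := five_smul_cyclic (Multiplicative.toAdd (ε ⟨p, hpA⟩)) (Multiplicative.toAdd (ε ⟨q, hqA⟩)) (by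
      intro h0
      apply hp1
      have : ε (⟨p, hpA⟩ ^ 5) = ε 1 := by
        rw [map_pow, map_one]; exact congrArg Multiplicative.ofAdd h0
      exact congrArg Subtype.val (hε this))
    refine ⟨k, ?_⟩
    have : ε (⟨q, hqA⟩ ^ 5) = ε ((⟨p, hpA⟩ ^ 5) ^ k) := by
      rw [map_pow, map_pow, map_pow]; exact congrArg Multiplicative.ofAdd hk
    exact congrArg Subtype.val (hε this)
  have hex : ∃ p ∈ A, p ^ 5 ≠ 1 := by
    obtain ⟨p, hp⟩ := QuotientGroup.mk_surjective (eA.symm (Multiplicative.ofAdd (1, 0, 0, 0)))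
    refine ⟨p, p.2, fun h0 => ?_⟩
    have h1 : p ^ 5 = 1 := Subtype.ext h0
    have h2 : (Abelianization.of p) ^ 5 = 1 := by rw [← map_pow, h1, map_one]
    have hp' : Abelianization.of p = eA.symm (Multiplicative.ofAdd (1, 0, 0, 0)) := hp
    rw [hp', ← map_pow, MulEquiv.map_eq_one_iff] at h2
    exact ofAdd_pow_five_ne_one h2
  let P : Subgroup G :=
    { carrier := {g | ∃ h ∈ A, h ^ 5 = g}
      one_mem' := ⟨1, A.one_mem, one_pow 5⟩
      mul_mem' := by
        rintro _ _ ⟨a, ha, rfl⟩ ⟨b, hb, rfl⟩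
        exact ⟨a * b, A.mul_mem ha hb, (show Commute a b from hAab a ha b hb).mul_pow 5⟩
      inv_mem' := by
        rintro _ ⟨a, ha, rfl⟩
        exact ⟨a⁻¹, A.inv_mem ha, inv_pow a 5⟩ }
  have hPn : P.Normal := ⟨by
    rintro _ ⟨a, ha, rfl⟩ g
    exact ⟨g * a * g⁻¹, hAn.conj_mem a ha g, conj_pow⟩⟩
  have hPne : P ≠ ⊥ := by
    obtain ⟨p, hpA, hp1⟩ := hex
    intro h0
    have : p ^ 5 ∈ P := ⟨p, hpA, rfl⟩
    rw [h0, Subgroup.mem_bot] at this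
    exact hp1 this
  have hPA : P ≤ A := by
    rintro _ ⟨a, ha, rfl⟩
    exact A.pow_mem ha 5
  -- the normal subgroup of fifth powers of `A` meets the center, so it contains all elements of
  -- `A` fixed by `s`
  obtain ⟨x, hxA, hx5⟩ : s ^ 5 ∈ P := by
    have heq := eq_of_le_of_card_five hC
      (inf_le_inf hPA (Subgroup.center_le_centralizer {s})) (inf_center_ne_bot hp P hPne)
    rw [← heq] at hsC
    exact hsC.1
  have hs1 : s ^ 5 ≠ 1 := hne s hsA
  have hxG : x ∉ commutator G := by
    intro hx
    obtain ⟨n, hn, rfl⟩ := hder x hx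
    apply hs1
    obtain ⟨k, hk⟩ := hcyc _ hxA n hn (by rw [hx5]; exact hs1)
    rw [hx5] at hk
    have hc : Commute (s * n * s⁻¹) n⁻¹ :=
      hAab _ (hAn.conj_mem n hn s) _ (A.inv_mem hn)
    rw [← hx5, hc.mul_pow, conj_pow, inv_pow, hk]
    group
  -- the norm of `x` is a fixed point of `s`, and a nontrivial one would allow to solve
  -- `(xᵏ s)⁵ = 1`
  have hnorm : (x * s) ^ 5 * (s ^ 5)⁻¹ = 1 := by
    have hν : ∀ y, (y * s) ^ 5 * (s ^ 5)⁻¹ =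
        y * (s * y * s⁻¹) * (s ^ 2 * y * (s ^ 2)⁻¹) * (s ^ 3 * y * (s ^ 3)⁻¹) *
          (s ^ 4 * y * (s ^ 4)⁻¹) := by
      intro y
      simp only [pow_succ (y * s), pow_zero]
      group
    by_contra hν1
    have hcm : ∀ i j : ℕ, Commute (s ^ i * x * (s ^ i)⁻¹) (s ^ j * x * (s ^ j)⁻¹) := fun i j =>
      hAab _ (hAn.conj_mem x hxA _) _ (hAn.conj_mem x hxA _)
    have c01 : Commute x (s * x * s⁻¹) := by simpa using hcm 0 1
    have c02 : Commute x (s ^ 2 * x * (s ^ 2)⁻¹) := by simpa using hcm 0 2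
    have c03 : Commute x (s ^ 3 * x * (s ^ 3)⁻¹) := by simpa using hcm 0 3
    have c04 : Commute x (s ^ 4 * x * (s ^ 4)⁻¹) := by simpa using hcm 0 4
    have c12 : Commute (s * x * s⁻¹) (s ^ 2 * x * (s ^ 2)⁻¹) := by simpa using hcm 1 2
    have c13 : Commute (s * x * s⁻¹) (s ^ 3 * x * (s ^ 3)⁻¹) := by simpa using hcm 1 3
    have c14 : Commute (s * x * s⁻¹) (s ^ 4 * x * (s ^ 4)⁻¹) := by simpa using hcm 1 4
    have hνk : ∀ k : ℤ, ((x * s) ^ 5 * (s ^ 5)⁻¹) ^ k = (x ^ k * s) ^ 5 * (s ^ 5)⁻¹ := by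
      intro k
      rw [hν, hν, (((c04.mul_left c14).mul_left (hcm 2 4)).mul_left (hcm 3 4)).mul_zpow,
        ((c03.mul_left c13).mul_left (hcm 2 3)).mul_zpow, (c02.mul_left c12).mul_zpow,
        c01.mul_zpow, conj_zpow, conj_zpow, conj_zpow, conj_zpow]
    have hmem : (x * s) ^ 5 * (s ^ 5)⁻¹ ∈ A ⊓ Subgroup.centralizer {s} := by
      refine Subgroup.mul_mem _ ⟨hpowA _, ?_⟩ (Subgroup.inv_mem _ hsC)
      refine Subgroup.mem_centralizer_singleton_iff.2 ?_
      have h1 : Commute ((x * s) ^ 5) (x * s) := (Commute.refl _).pow_left 5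
      have h2 : Commute ((x * s) ^ 5) x := hAab _ (hpowA _) _ hxA
      have h3 := h2.inv_right.mul_right h1
      rw [inv_mul_cancel_left] at h3
      exact h3.eq
    have hz := mem_zpowers_of_prime_card (G := (A ⊓ Subgroup.centralizer {s} : Subgroup G))
      (g := ⟨_, hmem⟩) (g' := ⟨_, Subgroup.inv_mem _ hsC⟩) hC
      (fun h0 => hν1 (congrArg Subtype.val h0))
    obtain ⟨k, hk⟩ := hz
    have hk' : ((x * s) ^ 5 * (s ^ 5)⁻¹) ^ k = (s ^ 5)⁻¹ := congrArg Subtype.val hk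
    rw [hνk] at hk'
    refine hne (x ^ k * s) (fun hm => hsA ?_) (mul_eq_right.1 hk')
    exact (Subgroup.mul_mem_cancel_left A (A.zpow_mem hxA k)).1 hm
  refine ⟨s, x, ?_, ?_⟩
  · -- a proper subgroup would lie in a maximal one, which would contain `A` and `s`
    by_contra hcl
    obtain ⟨n, hn⟩ := (hp.to_subgroup (Subgroup.closure {s, x})).exists_card_eq
    have hn5 : n ≤ 5 := by
      have hd := Subgroup.card_subgroup_dvd_card (Subgroup.closure {s, x})
      rw [hn, cardG] at hd
      have h6 := (Nat.pow_dvd_pow_iff_le_right (by norm_num)).1 hd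
      rcases h6.lt_or_eq with hlt | heq
      · omega
      · exact absurd (Subgroup.eq_top_of_card_eq _ (by rw [hn, heq, cardG])) hcl
    obtain ⟨K, hK, hle⟩ := Sylow.exists_subgroup_card_pow_prime_le 5
      (by rw [cardG]; exact pow_dvd_pow 5 (by norm_num)) (Subgroup.closure {s, x}) hn hn5
    have hKi : K.index = 5 := by
      have := Subgroup.card_mul_index K
      rw [hK, cardG] at this
      omega
    have hGK := (normal_of_index_five hp K hKi).2
    have hsK : s ∈ K := hle (Subgroup.subset_closure (by simp))
    have hxK : x ∈ K := hle (Subgroup.subset_closure (by simp))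
    have hNi : ((commutator G).subgroupOf A).index = 5 := by
      have := Subgroup.relIndex_mul_index hGA
      rw [hcG, hA5] at this
      change (commutator G).relIndex A = 5
      omega
    have htop := zpowers_sup_eq_top ((commutator G).subgroupOf A) hNi (s := ⟨x, hxA⟩)
      (fun hm => hxG (Subgroup.mem_subgroupOf.1 hm))
    have hAK : A ≤ K := by
      rw [← Subgroup.subgroupOf_eq_top, eq_top_iff, ← htop, sup_le_iff]
      exact ⟨by rw [Subgroup.zpowers_le]; exact hxK, fun g hg => hGK hg⟩
    have : A = K := Subgroup.eq_of_le_of_card_ge hAK (by rw [hK, hcA]; norm_num)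
    exact hsA (this ▸ hsK)
  · intro i
    fin_cases i
    · exact hnorm
    · exact commutatorElement_eq_one_iff_mul_comm.2 (hAab _ hxA _ (hAn.conj_mem x hxA s))
    · exact commutatorElement_eq_one_iff_mul_comm.2 (hAab _ hxA _ (hAn.conj_mem x hxA (s ^ 2)))
    · exact mul_inv_eq_one.2 hx5.symm

end FiveTower

/-- let `𝔊` be a finite metabelian `5`-group realizing the Artin pattern of
the main theorem.  Then the generator rank of `𝔊` is `d₁𝔊 = dim_{𝔽₅} H¹(𝔊,𝔽₅) = 2` and the
relation rank of `𝔊` is `d₂𝔊 = dim_{𝔽₅} H²(𝔊,𝔽₅) = 4`, where `𝔽₅ = ℤ/5ℤ` carries the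
trivial `𝔊`-action. -/
theorem generator_rank_and_relation_rank (𝔊 : Type) [Group 𝔊] [Finite 𝔊]
    (h𝔊 : HasArtinPattern 𝔊) :
    Module.finrank (ZMod 5)
      (groupCohomology (Rep.trivial (ZMod 5) 𝔊 (ZMod 5)) 1) = 2 ∧
    Module.finrank (ZMod 5)
      (groupCohomology (Rep.trivial (ZMod 5) 𝔊 (ZMod 5)) 2) = 4 := by
  obtain ⟨hcard, s, x, hgen, hrel⟩ := FiveTower.exists_generators h𝔊
  exact ⟨FiveTower.finrank_H1 hcard hgen hrel, FiveTower.finrank_H2 hcard hgen hrel⟩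
end

section
/- Let K = ℚ(√3812377) be the real quadratic field with fundamental discriminant d = 3812377 = 991 · 3847. Then the 5-primary part (Sylow 5-subgroup) of the ideal class group of the ring of integers of K is isomorphic to (ℤ/5ℤ) × (ℤ/5ℤ); in particular the class number of K is divisible by 25. -/
/-!
The ring of integers of `K = ℚ(√d)`, `d = 3812377`, is `ℤ[ω]` with `ω = (1 + √d) / 2`
(`exists_algEquiv`, `integral_coords`, `exists_ringEquiv`), so the discriminant is `d`. The class
group is `ℤ/15 × ℤ/5`; the argument shows that its order divides `75` and that it contains
`ℤ/5 × ℤ/5`, and then the Sylow `5`-subgroup is this copy of `ℤ/5 × ℤ/5` (`sylow_equiv`).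

Upper bound. By Minkowski every ideal class contains an ideal of norm at most `976`. Each prime
below `977` is either inert, or the first entry of a relation coming from an element whose norm is
that prime times primes already treated (`chain`), starting from `3` and `67`. So the class group
is generated by the classes of a prime `P` above `3` and a prime `R` above `67`
(`cl_mem_of_absNorm_le`). Explicit elements `α` and `β` of norm `- 3 ^ 15` and `67 ^ 5` show
`P ^ 15 = (α)` and `R ^ 5 = (β)` (`exists_pow_eq_span`), so the order divides `75`.

Lower bound. If `P ^ (3 i) * R ^ j = (γ)`, then `α ^ i * β ^ j` is `γ ^ 5` times a unit. The unit
`ε` is not a fifth power, hence by Dirichlet's theorem it generates the units modulo fifth powers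
(`units_mod_fifth`), and `α ^ i * β ^ j = ε ^ k * w ^ 5` for some `k` and `w`. The quintic residue
characters at primes above `281` and `601` are trivial on `ε` and separate `α` from `β`, which
gives `5 ∣ i` and `5 ∣ j` (`independent`).
-/

open Polynomial

set_option linter.unusedSectionVars false

namespace QuadField

/-! ### Ideal classes in a ring isomorphic to `ℤ[(1 + √3812377) / 2]` -/

/-- The order `ℤ[ω]` with `ω ^ 2 = 953094 + ω`, that is `ω = (1 + √3812377) / 2`; the element
`⟨a, b⟩` is `a + b ω`, of norm `a ^ 2 + a b - 953094 b ^ 2`. -/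
abbrev Quad : Type := QuadraticAlgebra ℤ 953094 1

section Ideals

variable {O : Type*} [CommRing O] [IsDedekindDomain O]

open Classical in
/-- The class of an ideal, with the junk value `1` at the zero ideal. -/
noncomputable def cl (I : Ideal O) : ClassGroup O :=
  if h : I = ⊥ then 1 else ClassGroup.mk0 ⟨I, mem_nonZeroDivisors_of_ne_zero h⟩

lemma cl_mul {I J : Ideal O} (hI : I ≠ ⊥) (hJ : J ≠ ⊥) : cl (I * J) = cl I * cl J := by
  have h : I * J ≠ ⊥ := mul_ne_zero hI hJ
  rw [cl, cl, cl, dif_neg hI, dif_neg hJ, dif_neg h, ← map_mul]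
  rfl

lemma cl_one : cl (1 : Ideal O) = 1 := by
  rw [cl, dif_neg (show (1 : Ideal O) ≠ ⊥ from one_ne_zero)]
  exact map_one _

lemma cl_pow {I : Ideal O} (hI : I ≠ ⊥) (n : ℕ) : cl (I ^ n) = cl I ^ n := by
  induction n with
  | zero => rw [pow_zero, pow_zero, cl_one]
  | succ n ih => rw [pow_succ, pow_succ, cl_mul (pow_ne_zero n hI) hI, ih]

lemma cl_span (x : O) : cl (Ideal.span {x}) = 1 := by
  by_cases h : Ideal.span {x} = ⊥
  · rw [cl, dif_pos h]
  · rw [cl, dif_neg h, ClassGroup.mk0_eq_one_iff]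
    exact ⟨⟨x, rfl⟩⟩

lemma exists_span_of_cl_eq_one {I : Ideal O} (h : cl I = 1) : ∃ x, I = Ideal.span {x} := by
  by_cases h0 : I = ⊥
  · exact ⟨0, by simp [h0]⟩
  · rw [cl, dif_neg h0, ClassGroup.mk0_eq_one_iff] at h
    exact h.principal

/-- An ideal class lies in `H` as soon as those of all prime divisors do. -/
lemma cl_mem_of_primes (H : Subgroup (ClassGroup O)) (I : Ideal O) (hI : I ≠ ⊥)
    (h : ∀ R : Ideal O, R.IsPrime → R ≠ ⊥ → I ≤ R → cl R ∈ H) : cl I ∈ H := by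
  revert hI h
  induction I using UniqueFactorizationMonoid.induction_on_prime with
  | h₁ => intro h; exact absurd rfl h
  | h₂ I hI =>
    intro _ _
    rw [Ideal.isUnit_iff.1 hI, ← Ideal.one_eq_top, cl_one]
    exact H.one_mem
  | h₃ I P hI hP ih =>
    intro _ h
    rw [cl_mul hP.ne_zero hI]
    exact H.mul_mem (h P (Ideal.isPrime_of_prime hP) hP.ne_zero Ideal.mul_le_left)
      (ih hI fun R hR hR0 hle ↦ h R hR hR0 (Ideal.mul_le_right.trans hle))

variable [Module.Free ℤ O] [Module.Finite ℤ O] (e : Quad ≃+* O)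

include e in
lemma absNorm_span (x : Quad) : Ideal.absNorm (Ideal.span {e x}) = x.norm.natAbs := by
  rw [Ideal.absNorm_span_singleton]
  have h1 : Algebra.norm ℤ (e x) = Algebra.norm ℤ x :=
    Algebra.norm_eq_of_algEquiv (AlgEquiv.ofRingEquiv (f := e) (fun n ↦ by simp)) x
  rw [h1, Algebra.norm_apply, ← QuadraticAlgebra.det_toLinearMap_eq_norm]
  rfl

include e in
lemma absNorm_span_nat (p : ℕ) : Ideal.absNorm (Ideal.span {(p : O)}) = p ^ 2 := by
  rw [← map_natCast e p, absNorm_span, QuadraticAlgebra.norm_natCast,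
    Int.natAbs_pow, Int.natAbs_natCast]

include e in
lemma charZero : CharZero O := charZero_of_injective_ringHom (f := e.toRingHom) e.injective

include e in
lemma ne_bot_of_mem {p : ℕ} (hp : p ≠ 0) {P : Ideal O} (h : (p : O) ∈ P) : P ≠ ⊥ := by
  rintro rfl
  have := charZero e
  exact hp (by exact_mod_cast (Submodule.mem_bot O).1 h)

include e in
/-- A prime ideal above `p` either has norm `p` or is generated by `p`. -/
lemma prime_over {p : ℕ} (hp : p.Prime) {P : Ideal O} (hP : P.IsPrime) (h : (p : O) ∈ P) :
    Ideal.absNorm P = p ∨ P = Ideal.span {(p : O)} := by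
  obtain ⟨J, hJ⟩ := Ideal.dvd_iff_le.2 ((Ideal.span_singleton_le_iff_mem P).2 h)
  have hn := absNorm_span_nat e p
  rw [hJ, map_mul] at hn
  have h1 : Ideal.absNorm P ≠ 1 := fun h ↦ hP.ne_top (Ideal.absNorm_eq_one_iff.1 h)
  obtain ⟨k, hk, hk'⟩ := (Nat.dvd_prime_pow hp).1 (Dvd.intro _ hn)
  interval_cases k
  · exact absurd hk' (by simpa using h1)
  · left; simpa using hk'
  · right
    rw [hk'] at hn
    have : Ideal.absNorm J = 1 := by
      have := pow_pos hp.pos 2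
      exact Nat.eq_of_mul_eq_mul_left this (by simpa using hn)
    rw [hJ, Ideal.absNorm_eq_one_iff.1 this, Ideal.mul_top]

include e in
/-- A prime ideal of norm `p` has a complementary prime `P'` with `P * P' = (p)`. -/
lemma exists_conj {p : ℕ} (hp : p.Prime) {P : Ideal O}
    (h : (p : O) ∈ P) (hn : Ideal.absNorm P = p) :
    ∃ P' : Ideal O, P'.IsPrime ∧ Ideal.span {(p : O)} = P * P' := by
  obtain ⟨J, hJ⟩ := Ideal.dvd_iff_le.2 ((Ideal.span_singleton_le_iff_mem P).2 h)
  refine ⟨J, ?_, hJ⟩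
  have hn' := absNorm_span_nat e p
  rw [hJ, map_mul, hn, sq] at hn'
  have := Nat.eq_of_mul_eq_mul_left hp.pos hn'
  exact Ideal.isPrime_of_irreducible_absNorm (this ▸ hp)

include e in
lemma isMaximal_of_prime {p : ℕ} (hp : p.Prime) {P : Ideal O} (hP : P.IsPrime) (h : (p : O) ∈ P) :
    P.IsMaximal := hP.isMaximal (ne_bot_of_mem e hp.ne_zero h)

include e in
/-- All primes above the same `p` have the same class up to inversion. -/
lemma cl_eq_or_inv {p : ℕ} (hp : p.Prime) {P P' : Ideal O} (hP : P.IsPrime) (hP' : P'.IsPrime)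
    (h : (p : O) ∈ P) (h' : (p : O) ∈ P') : cl P' = cl P ∨ cl P' = (cl P)⁻¹ := by
  have hP0 := ne_bot_of_mem e hp.ne_zero h
  rcases prime_over e hp hP h with hn | rfl
  · obtain ⟨R, hR, hPR⟩ := exists_conj e hp h hn
    have hR0 : R ≠ ⊥ := by
      rintro rfl
      rw [Ideal.mul_bot, Ideal.span_singleton_eq_bot] at hPR
      have := charZero e
      exact hp.ne_zero (by exact_mod_cast hPR)
    have hle : P * R ≤ P' := hPR ▸ (Ideal.span_singleton_le_iff_mem P').2 h'
    rcases hP'.mul_le.1 hle with hle | hle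
    · left
      rw [(isMaximal_of_prime e hp hP h).eq_of_le hP'.ne_top hle]
    · right
      rw [← (hR.isMaximal hR0).eq_of_le hP'.ne_top hle]
      rw [eq_inv_iff_mul_eq_one, mul_comm, ← cl_mul hP0 hR0, ← hPR, cl_span]
  · left
    rw [(isMaximal_of_prime e hp hP h).eq_of_le hP'.ne_top
      ((Ideal.span_singleton_le_iff_mem P').2 h')]

/-- `Good H n`: every prime ideal containing the integer `n` has its class in `H`. -/
def Good (H : Subgroup (ClassGroup O)) (n : ℕ) : Prop :=
  ∀ P : Ideal O, P.IsPrime → (n : O) ∈ P → cl P ∈ H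

include e in
lemma good_of_mem (H : Subgroup (ClassGroup O)) {p : ℕ} (hp : p.Prime) {P : Ideal O}
    (hP : P.IsPrime) (h : (p : O) ∈ P) (hH : cl P ∈ H) : Good H p := by
  intro P' hP' h'
  rcases cl_eq_or_inv e hp hP hP' h h' with h | h <;> rw [h]
  · exact hH
  · exact H.inv_mem hH

include e in
/-- A prime above a divisor of `N(x) = x * star x` contains `x` or its conjugate. -/
lemma norm_mem {x : Quad} {P : Ideal O} (hP : P.IsPrime) {n : ℕ} (hn : n ∣ x.norm.natAbs)
    (h : (n : O) ∈ P) : e x ∈ P ∨ e (star x) ∈ P := by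
  apply hP.mem_or_mem
  rw [← map_mul, ← QuadraticAlgebra.algebraMap_norm_eq_mul_star]
  obtain ⟨k, hk⟩ := Int.natCast_dvd.2 hn
  rw [hk]
  simp only [algebraMap_int_eq, eq_intCast, map_mul, map_intCast, map_natCast]
  exact P.mul_mem_right _ h

/-- A prime ideal containing the product of a list of integers contains one of them. -/
lemma exists_mem_of_prod_mem {P : Ideal O} (hP : P.IsPrime) (L : List ℕ)
    (h : ((L.prod : ℕ) : O) ∈ P) : ∃ l ∈ L, (l : O) ∈ P := by
  induction L with
  | nil => exact absurd ((Ideal.eq_top_iff_one P).2 (by simpa using h)) hP.ne_top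
  | cons a L ih =>
    rw [List.prod_cons, Nat.cast_mul] at h
    rcases hP.mem_or_mem h with h | h
    · exact ⟨a, by simp, h⟩
    · obtain ⟨l, hl, hl'⟩ := ih h
      exact ⟨l, by simp [hl], hl'⟩

include e in
/-- If `P` divides `(x)` and `N(x) = ± p * ∏ L`, the cofactor is a product of primes above the
members of `L`. -/
lemma good_of_rel_aux (H : Subgroup (ClassGroup O)) {p : ℕ} (hp : p.Prime) (x : Quad) (L : List ℕ)
    (hx : x.norm.natAbs = p * L.prod) (hx0 : x.norm ≠ 0) (hL : ∀ l ∈ L, Good H l)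
    {P : Ideal O} (hn : Ideal.absNorm P = p) (hxP : e x ∈ P) : cl P ∈ H := by
  obtain ⟨J, hJ⟩ := Ideal.dvd_iff_le.2 ((Ideal.span_singleton_le_iff_mem P).2 hxP)
  have hnJ := absNorm_span e x
  have h0 : Ideal.absNorm (Ideal.span {e x}) ≠ 0 := by
    rw [hnJ]; exact Int.natAbs_ne_zero.2 hx0
  rw [hJ, map_mul] at h0
  have hP0 : P ≠ ⊥ := fun h ↦ h0 (by simp [h])
  have hJ0 : J ≠ ⊥ := fun h ↦ h0 (by simp [h])
  rw [hJ, map_mul, hx, hn] at hnJ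
  have hnJ := Nat.eq_of_mul_eq_mul_left hp.pos hnJ
  have hJH : cl J ∈ H := by
    apply cl_mem_of_primes H J hJ0
    intro R hR _ hle
    have hmem := hle (Ideal.absNorm_mem J)
    rw [hnJ] at hmem
    obtain ⟨l, hl, hl'⟩ := exists_mem_of_prod_mem hR L hmem
    exact hL l hl R hR hl'
  have h1 := cl_span (e x)
  rw [hJ, cl_mul hP0 hJ0] at h1
  rw [eq_inv_of_mul_eq_one_left h1]
  exact H.inv_mem hJH

include e in
/-- An element of norm `± p * ∏ L`, where all primes containing a member of `L` have their class
in `H`, puts the classes of the primes above `p` in `H`. -/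
lemma good_of_rel (H : Subgroup (ClassGroup O)) {p : ℕ} (hp : p.Prime) (x : Quad) (L : List ℕ)
    (hx : x.norm.natAbs = p * L.prod) (hx0 : x.norm ≠ 0) (hL : ∀ l ∈ L, Good H l) : Good H p := by
  intro P hP h
  rcases prime_over e hp hP h with hn | rfl
  · rcases norm_mem e hP (Dvd.intro _ hx.symm) h with hm | hm
    · exact good_of_rel_aux e H hp x L hx hx0 hL hn hm
    · exact good_of_rel_aux e H hp (star x) L (by rwa [QuadraticAlgebra.norm_star])
        (by rwa [QuadraticAlgebra.norm_star]) hL hn hm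
  · rw [cl_span]; exact H.one_mem

lemma int_dvd_of_mem {p : ℕ} (hp : p.Prime) {P : Ideal O} (hP : P.IsPrime) (h : (p : O) ∈ P)
    {n : ℤ} (hn : (n : O) ∈ P) : (p : ℤ) ∣ n := by
  by_contra hd
  have hc := (Int.isCoprime_iff_gcd_eq_one.2
    ((Nat.Prime.coprime_iff_not_dvd hp).2 fun h ↦ hd (Int.natCast_dvd.2 h)) : IsCoprime (p : ℤ) n)
  obtain ⟨a, b, hab⟩ := hc
  apply hP.ne_top
  rw [Ideal.eq_top_iff_one]
  have : (1 : O) = (a : O) * p + b * n := by exact_mod_cast congrArg (Int.cast (R := O)) hab.symm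
  rw [this]
  exact P.add_mem (P.mul_mem_left _ h) (P.mul_mem_left _ hn)

include e in
/-- If the discriminant is a non-residue modulo the odd prime `p` (Euler's criterion), then `p`
is inert, so the only prime above it is principal. -/
lemma good_inert (H : Subgroup (ClassGroup O)) {p : ℕ} (hp : p.Prime) (hp2 : p ≠ 2)
    (hd : 3812377 ^ (p / 2) % p = p - 1) : Good H p := by
  intro P hP h
  have : P = Ideal.span {(p : O)} := by
    apply le_antisymm _ ((Ideal.span_singleton_le_iff_mem P).2 h)
    intro y hy
    obtain ⟨x, rfl⟩ := e.surjective y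
    obtain ⟨a, b⟩ := x
    have h1 : (p : ℤ) ∣ QuadraticAlgebra.norm (⟨a, b⟩ : Quad) := by
      apply int_dvd_of_mem hp hP h
      rw [← map_intCast e]
      have := QuadraticAlgebra.algebraMap_norm_eq_mul_star (⟨a, b⟩ : Quad)
      rw [algebraMap_int_eq, eq_intCast] at this
      rw [this, map_mul]
      exact P.mul_mem_right _ hy
    rw [QuadraticAlgebra.norm_def] at h1
    have := Fact.mk hp
    have h2 : ((2 * a + b : ℤ) : ZMod p) ^ 2 = 3812377 * (b : ZMod p) ^ 2 := by
      have h3 := (ZMod.intCast_zmod_eq_zero_iff_dvd _ p).2 h1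
      push_cast at h3 ⊢
      linear_combination 4 * h3
    have hb : (b : ZMod p) = 0 := by
      by_contra hb
      -- otherwise `3812377` has the square root `t` modulo `p`
      set t : ZMod p := ((2 * a + b : ℤ) : ZMod p) / b with ht
      have ht2 : t ^ 2 = 3812377 := by
        rw [ht, div_pow, h2]; field_simp
      have hodd : 2 * (p / 2) = p - 1 := by
        have := hp.eq_two_or_odd'.resolve_left hp2
        obtain ⟨k, rfl⟩ := this
        omega
      have hd' : (3812377 : ZMod p) ^ (p / 2) = -1 := by
        have h5 : ((3812377 ^ (p / 2) % p + 1 : ℕ) : ZMod p) = 0 := by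
          rw [hd, Nat.sub_add_cancel hp.one_lt.le, ZMod.natCast_self]
        push_cast [ZMod.natCast_mod] at h5
        exact eq_neg_of_add_eq_zero_left h5
      rw [← ht2, ← pow_mul, hodd] at hd'
      have hp1 : p - 1 ≠ 0 := by have := hp.two_le; omega
      by_cases ht0 : t = 0
      · rw [ht0, zero_pow hp1] at hd'
        exact one_ne_zero (neg_eq_zero.1 hd'.symm)
      · rw [ZMod.pow_card_sub_one_eq_one ht0] at hd'
        have h6 : ((2 : ℕ) : ZMod p) = 0 := by push_cast; linear_combination hd'
        rw [ZMod.natCast_eq_zero_iff] at h6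
        exact hp2 ((Nat.prime_dvd_prime_iff_eq hp Nat.prime_two).1 h6)
    have ha : (a : ZMod p) = 0 := by
      rw [hb] at h2
      push_cast at h2
      rw [hb] at h2
      have h4 : (2 : ZMod p) * a = 0 := by
        have : (2 * (a : ZMod p)) ^ 2 = 0 := by linear_combination h2
        exact pow_eq_zero_iff two_ne_zero |>.1 this
      rcases mul_eq_zero.1 h4 with h5 | h5
      · exfalso
        have h5 : ((2 : ℕ) : ZMod p) = 0 := by exact_mod_cast h5
        rw [ZMod.natCast_eq_zero_iff] at h5
        exact hp2 ((Nat.prime_dvd_prime_iff_eq hp Nat.prime_two).1 h5)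
      · exact h5
    obtain ⟨a', rfl⟩ := (ZMod.intCast_zmod_eq_zero_iff_dvd _ p).1 ha
    obtain ⟨b', rfl⟩ := (ZMod.intCast_zmod_eq_zero_iff_dvd _ p).1 hb
    rw [Ideal.mem_span_singleton]
    refine ⟨e ⟨a', b'⟩, ?_⟩
    rw [← map_natCast e, ← map_mul]
    congr 1
    ext <;> simp
  rw [this, cl_span]
  exact H.one_mem

end Ideals

section Ideals2

variable {O : Type*} [CommRing O] [IsDedekindDomain O]

/-- An ideal with no prime divisor other than `P` is a power of `P`. -/
lemma eq_pow_of_primes (P : Ideal O) (I : Ideal O) (hI : I ≠ ⊥)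
    (h : ∀ R : Ideal O, R.IsPrime → R ≠ ⊥ → I ≤ R → R = P) : ∃ n : ℕ, I = P ^ n := by
  revert hI h
  induction I using UniqueFactorizationMonoid.induction_on_prime with
  | h₁ => intro h; exact absurd rfl h
  | h₂ I hI =>
    intro _ _
    exact ⟨0, by rw [pow_zero, Ideal.isUnit_iff.1 hI, Ideal.one_eq_top]⟩
  | h₃ I R hI hR ih =>
    intro _ h
    obtain ⟨n, hn⟩ := ih hI fun R hR hR0 hle ↦ h R hR hR0 (Ideal.mul_le_right.trans hle)
    refine ⟨n + 1, ?_⟩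
    rw [pow_succ', ← hn, h R (Ideal.isPrime_of_prime hR) hR.ne_zero Ideal.mul_le_left]

variable [Module.Free ℤ O] [Module.Finite ℤ O] (e : Quad ≃+* O)

include e

/-- A primitive element of norm `± p ^ k` generates the `k`-th power of a prime above `p`: it is
not divisible by `p`, so only one of the two primes above `p` can divide it. -/
lemma exists_pow_eq_span {p k : ℕ} (hp : p.Prime) (hk : k ≠ 0) (a b : ℤ)
    (hx : (QuadraticAlgebra.norm (⟨a, b⟩ : Quad)).natAbs = p ^ k) (hb : ¬ (p : ℤ) ∣ b) :
    ∃ P : Ideal O, P.IsPrime ∧ (p : O) ∈ P ∧ P ^ k = Ideal.span {e ⟨a, b⟩} := by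
  set x : Quad := ⟨a, b⟩ with hxd
  set I := Ideal.span {e x} with hI
  have hn : Ideal.absNorm I = p ^ k := by rw [hI, absNorm_span, hx]
  have hpk : ((p ^ k : ℕ) : O) ∈ I := hn ▸ Ideal.absNorm_mem I
  have hI0 : I ≠ ⊥ := ne_bot_of_mem e (pow_ne_zero k hp.ne_zero) hpk
  have hI1 : I ≠ ⊤ := by
    intro h
    rw [h, Ideal.absNorm_top] at hn
    exact hp.one_lt.ne' ((Nat.pow_eq_one.1 hn.symm).resolve_right hk)
  have hprim : ¬ I ≤ Ideal.span {(p : O)} := by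
    intro h
    rw [hI, Ideal.span_singleton_le_iff_mem, Ideal.mem_span_singleton] at h
    obtain ⟨y, hy⟩ := h
    obtain ⟨y, rfl⟩ := e.surjective y
    rw [← map_natCast e, ← map_mul] at hy
    have h2 := congrArg QuadraticAlgebra.im (e.injective hy)
    apply hb
    refine ⟨y.im, ?_⟩
    simpa [hxd] using h2
  have hmem : ∀ R : Ideal O, R.IsPrime → I ≤ R → (p : O) ∈ R := by
    intro R hR hle
    have := hle hpk
    rw [Nat.cast_pow] at this
    exact hR.mem_of_pow_mem k this
  obtain ⟨P, hP, hIP⟩ := Ideal.exists_le_maximal I hI1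
  have hpP := hmem P hP.isPrime hIP
  have hnP : Ideal.absNorm P = p := by
    rcases prime_over e hp hP.isPrime hpP with h | h
    · exact h
    · exact absurd (h ▸ hIP) hprim
  obtain ⟨P', hP', hPP'⟩ := exists_conj e hp hpP hnP
  obtain ⟨n, hIn⟩ := eq_pow_of_primes P I hI0 (by
    intro R hR hR0 hle
    by_contra hne
    have hRmax := hR.isMaximal hR0
    have hle2 : P * P' ≤ R := hPP' ▸ (Ideal.span_singleton_le_iff_mem R).2 (hmem R hR hle)
    rcases hR.mul_le.1 hle2 with h | h
    · exact hne (hP.eq_of_le hR.ne_top h).symm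
    · have hP'0 : P' ≠ ⊥ := by
        rintro rfl
        rw [Ideal.mul_bot] at hPP'
        have h0 : (p : O) ∈ (⊥ : Ideal O) := hPP' ▸ Ideal.mem_span_singleton_self (p : O)
        exact ne_bot_of_mem e hp.ne_zero h0 rfl
      have hPR : P' = R := (hP'.isMaximal hP'0).eq_of_le hR.ne_top h
      apply hprim
      rw [hPP', hPR]
      have hcop : P ⊔ R = ⊤ := hP.coprime_of_ne hRmax (Ne.symm hne)
      rw [Ideal.mul_eq_inf_of_isCoprime (Ideal.isCoprime_iff_sup_eq.2 hcop)]
      exact le_inf hIP hle)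
  refine ⟨P, hP.isPrime, hpP, ?_⟩
  rw [hIn, map_pow, hnP] at hn
  rw [hIn, Nat.pow_right_injective hp.two_le hn]

end Ideals2

/-! ### Generators of the class group: relations below the Minkowski bound -/

/-- Trial-division test for primality. -/
def primeTest (p : ℕ) : Bool :=
  decide (2 ≤ p) && (List.range p).all fun q ↦ decide (q < 2) || decide (p % q ≠ 0)

lemma prime_of_primeTest {p : ℕ} (h : primeTest p = true) : p.Prime := by
  simp only [primeTest, Bool.and_eq_true, decide_eq_true_eq, List.all_eq_true, List.mem_range,
    Bool.or_eq_true] at h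
  refine Nat.prime_def_lt'.2 ⟨h.1, fun m hm hlt hd ↦ ?_⟩
  rcases h.2 m hlt with h | h
  · omega
  · exact h (Nat.mod_eq_zero_of_dvd hd)

/-- Data of a relation in the class group: the element `a + b ω` is meant to have norm
`± p * ∏ L`. -/
structure Rel where
  p : ℕ
  a : ℤ
  b : ℤ
  L : List ℕ

/-- Verifies a chain of relations: each one expresses the primes above a new rational prime `p`
through primes above rational primes treated before (those in `known`, plus earlier entries). -/
def chainTest : List ℕ → List Rel → Bool
  | _, [] => true
  | known, r :: rs =>
    primeTest r.p && (r.L.all fun l ↦ known.contains l) &&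
    decide ((r.a * r.a + r.a * r.b - 953094 * (r.b * r.b)).natAbs = r.p * r.L.prod) &&
    decide (r.a * r.a + r.a * r.b - 953094 * (r.b * r.b) ≠ 0) &&
    chainTest (r.p :: known) rs

/-- Starting from the primes above `3` and `67`, this chain reaches every other split prime below
`977`. No prime below `977` ramifies, as `3812377 = 991 * 3847`. -/
def chain : List Rel :=
  [⟨691, 1951, 2, [3]⟩,
   ⟨421, 5857, 6, [67]⟩,
   ⟨241, 35129, 36, [421]⟩,
   ⟨73, 1965, 2, [3, 241]⟩,
   ⟨61, 1391, 2, [73, 421]⟩,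
   ⟨197, 7797, 8, [3, 241]⟩,
   ⟨281, 659, 2, [61, 197]⟩,
   ⟨2, 751, 1, [281, 691]⟩,
   ⟨229, 976, 1, [2]⟩,
   ⟨661, 1024, 1, [2, 73]⟩,
   ⟨487, 1084, 1, [2, 229]⟩,
   ⟨673, 1681, 2, [3, 487]⟩,
   ⟨193, 9751, 10, [673]⟩,
   ⟨683, 1985, 2, [193]⟩,
   ⟨71, 1939, 2, [3, 229]⟩,
   ⟨13, 2111, 2, [73, 683]⟩,
   ⟨367, 5855, 6, [13]⟩,
   ⟨101, 1961, 2, [367]⟩,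
   ⟨163, 29273, 30, [13]⟩,
   ⟨599, 17561, 18, [163]⟩,
   ⟨523, 707, 2, [13, 487]⟩,
   ⟨347, 916, 1, [2, 163]⟩,
   ⟨137, 791, 2, [67, 347]⟩,
   ⟨263, 1012, 1, [2, 137]⟩,
   ⟨479, 1919, 2, [263]⟩,
   ⟨83, 953, 2, [73, 479]⟩,
   ⟨397, 1037, 2, [83, 83]⟩,
   ⟨823, 1267, 1, [2, 397]⟩,
   ⟨31, 1343, 2, [163, 397]⟩,
   ⟨647, 955, 1, [2, 31]⟩,
   ⟨383, 1831, 2, [3, 397]⟩,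
   ⟨967, 1875, 2, [3, 101]⟩,
   ⟨103, 1901, 2, [31, 61]⟩,
   ⟨109, 1911, 2, [3, 479]⟩,
   ⟨787, 1060, 1, [2, 109]⟩,
   ⟨43, 1947, 2, [3, 137]⟩,
   ⟨151, 37079, 38, [43]⟩,
   ⟨641, 871, 1, [2, 151]⟩,
   ⟨227, 5867, 6, [641]⟩,
   ⟨271, 1001, 2, [43, 241]⟩,
   ⟨239, 907, 1, [2, 271]⟩,
   ⟨857, 7793, 8, [239]⟩,
   ⟨839, 1097, 2, [13, 239]⟩,
   ⟨41, 1289, 2, [151, 347]⟩,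
   ⟨953, 1015, 1, [2, 41]⟩,
   ⟨17, 827, 2, [193, 953]⟩,
   ⟨947, 3901, 4, [17]⟩,
   ⟨619, 15631, 16, [947]⟩,
   ⟨743, 623, 2, [17, 271]⟩,
   ⟨353, 1133, 2, [17, 421]⟩,
   ⟨7, 1907, 2, [41, 599]⟩,
   ⟨659, 1703, 2, [7, 197]⟩,
   ⟨709, 136, 1, [2, 659]⟩,
   ⟨907, 1829, 2, [7, 73]⟩,
   ⟨521, 11689, 12, [907]⟩,
   ⟨149, 1955, 2, [7, 13]⟩,
   ⟨419, 1061, 2, [43, 149]⟩,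
   ⟨467, 1159, 1, [2, 419]⟩,
   ⟨563, 1883, 2, [467]⟩,
   ⟨401, 1493, 2, [7, 563]⟩,
   ⟨727, 1713, 2, [3, 401]⟩,
   ⟨23, 1991, 2, [7, 967]⟩,
   ⟨337, 13661, 14, [23]⟩,
   ⟨601, 1085, 2, [13, 337]⟩,
   ⟨821, 1595, 2, [23, 67]⟩,
   ⟨317, 2021, 2, [13, 67]⟩,
   ⟨431, 2027, 2, [17, 41]⟩,
   ⟨463, 2345, 2, [13, 281]⟩,
   ⟨911, 2435, 2, [17, 137]⟩,
   ⟨131, 2531, 2, [83, 239]⟩,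
   ⟨577, 895, 1, [2, 131]⟩,
   ⟨811, 2639, 2, [17, 229]⟩,
   ⟨311, 2855, 2, [61, 229]⟩,
   ⟨251, 2683, 4, [103, 311]⟩,
   ⟨653, 15607, 16, [251]⟩,
   ⟨701, 2741, 2, [17, 311]⟩,
   ⟨607, 319, 1, [2, 701]⟩,
   ⟨379, 11719, 12, [607]⟩,
   ⟨173, 1181, 2, [23, 607]⟩,
   ⟨461, 1931, 2, [173]⟩,
   ⟨139, 2875, 4, [103, 487]⟩,
   ⟨863, 844, 1, [2, 139]⟩,
   ⟨233, 1229, 2, [71, 139]⟩,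
   ⟨449, 1565, 2, [13, 233]⟩,
   ⟨191, 2884, 3, [2, 659]⟩,
   ⟨761, 4928, 5, [2, 317]⟩]

/-- The inert primes below `977`. -/
def inertPrimes : List ℕ :=
   [5, 11, 19, 29, 37, 47, 53, 59, 79, 89, 97, 107, 113, 127, 157, 167, 179, 181, 199, 211, 223,
   257, 269, 277, 283, 293, 307, 313, 331, 349, 359, 373, 389, 409, 433, 439, 443, 457, 491, 499,
   503, 509, 541, 547, 557, 569, 571, 587, 593, 613, 617, 631, 643, 677, 719, 733, 739, 751, 757,
   769, 773, 797, 809, 827, 829, 853, 859, 877, 881, 883, 887, 919, 929, 937, 941, 971]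

lemma chain_ok : chainTest [3, 67] chain = true := by decide +kernel

lemma inert_ok : (inertPrimes.all fun p ↦
    primeTest p && decide (p ≠ 2) && decide (3812377 ^ (p / 2) % p = p - 1)) = true := by
  decide +kernel

/-- Every number below `977` is less than `2`, has a proper divisor among the primes up to `31`,
or is `3`, `67`, an entry of `inertPrimes` or the prime of an entry of `chain`. -/
lemma primes_covered : ((List.range 977).all fun p ↦ decide (p < 2) ||
    ([2, 3, 5, 7, 11, 13, 17, 19, 23, 29, 31].any fun q ↦ decide (q < p) && decide (p % q = 0)) ||
    ([3, 67] ++ inertPrimes ++ chain.map Rel.p).contains p) = true := by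
  decide +kernel

section Generation

variable {O : Type*} [CommRing O] [IsDedekindDomain O]
  [Module.Free ℤ O] [Module.Finite ℤ O] (e : Quad ≃+* O)

include e

/-- Soundness of `chainTest`. -/
lemma good_of_chainTest (H : Subgroup (ClassGroup O)) (rs : List Rel) :
    ∀ known : List ℕ, chainTest known rs = true → (∀ l ∈ known, Good H l) →
      ∀ r ∈ rs, Good H r.p := by
  induction rs with
  | nil => simp
  | cons r rs ih =>
    intro known hc hk
    simp only [chainTest, Bool.and_eq_true, decide_eq_true_eq, List.all_eq_true,
      List.contains_iff_mem] at hc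
    obtain ⟨⟨⟨⟨h1, h2⟩, h3⟩, h4⟩, h5⟩ := hc
    have hnorm : QuadraticAlgebra.norm (⟨r.a, r.b⟩ : Quad) =
        r.a * r.a + r.a * r.b - 953094 * (r.b * r.b) := by
      rw [QuadraticAlgebra.norm_def]; ring
    have hr : Good H r.p := good_of_rel e H (prime_of_primeTest h1) ⟨r.a, r.b⟩ r.L
      (by rw [hnorm, h3]) (by rw [hnorm]; exact h4) fun l hl ↦ hk l (h2 l hl)
    have hk' : ∀ l ∈ r.p :: known, Good H l := by
      intro l hl
      rcases List.mem_cons.1 hl with rfl | hl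
      · exact hr
      · exact hk l hl
    intro s hs
    rcases List.mem_cons.1 hs with rfl | hs
    · exact hr
    · exact ih _ h5 hk' s hs

lemma good_of_lt (H : Subgroup (ClassGroup O)) (h3 : Good H 3) (h67 : Good H 67) {p : ℕ}
    (hp : p.Prime) (hlt : p < 977) : Good H p := by
  have h := primes_covered
  rw [List.all_eq_true] at h
  have h := h p (List.mem_range.2 hlt)
  simp only [Bool.or_eq_true, decide_eq_true_eq, List.any_eq_true, Bool.and_eq_true,
    List.contains_iff_mem, List.mem_append, List.mem_map] at h
  rcases h with (h | ⟨q, hq, hqp, hdvd⟩) | (h | h) | ⟨r, hr, rfl⟩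
  · exact absurd hp.two_le (by omega)
  · exfalso
    rcases (Nat.dvd_prime hp).1 (Nat.dvd_of_mod_eq_zero hdvd) with rfl | rfl
    · revert hq; decide
    · omega
  · simp only [List.mem_cons, List.not_mem_nil, or_false] at h
    rcases h with rfl | rfl
    · exact h3
    · exact h67
  · have h' := inert_ok
    rw [List.all_eq_true] at h'
    have h' := h' p h
    simp only [Bool.and_eq_true, decide_eq_true_eq] at h'
    exact good_inert e H hp h'.1.2 h'.2
  · refine good_of_chainTest e H chain _ chain_ok ?_ r hr
    intro l hl
    simp only [List.mem_cons, List.not_mem_nil, or_false] at hl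
    rcases hl with rfl | rfl
    · exact h3
    · exact h67

/-- A subgroup that contains the classes of the primes above `3` and `67` contains the class of
every nonzero ideal of norm at most `976`. -/
lemma cl_mem_of_absNorm_le (H : Subgroup (ClassGroup O)) (h3 : Good H 3) (h67 : Good H 67)
    (I : Ideal O) (hI : I ≠ ⊥) (hn : Ideal.absNorm I ≤ 976) : cl I ∈ H := by
  apply cl_mem_of_primes H I hI
  intro R hR hR0 hle
  have := hR.isMaximal hR0
  obtain ⟨p, k, hk, hpR, hp, hpk⟩ := Ideal.exists_prime_and_absNorm_eq_pow R
  have hI0 : Ideal.absNorm I ≠ 0 := fun h ↦ hI (Ideal.absNorm_eq_zero_iff.1 h)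
  have h1 : Ideal.absNorm R ≤ Ideal.absNorm I :=
    Nat.le_of_dvd (Nat.pos_of_ne_zero hI0) (Ideal.absNorm_dvd_absNorm_of_le hle)
  have h2 : p ≤ p ^ k := Nat.le_self_pow (by omega) p
  exact good_of_lt e H h3 h67 hp (by omega) R hR hpR

end Generation

/-! ### Independence of two classes of order five -/

section LowerBound

variable {O : Type*} [CommRing O]

/-- Reduction modulo a degree-one prime above `q`, sending `ω` to a root `r` of its minimal
polynomial modulo `q`. -/
lemma exists_hom (e : Quad ≃+* O) (q : ℕ) (r : ZMod q) (hr : r * r = 953094 + r) :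
    ∃ φ : O →+* ZMod q, ∀ a b : ℤ, φ (e ⟨a, b⟩) = a + b * r := by
  let ψ : Quad →ₐ[ℤ] ZMod q := QuadraticAlgebra.lift ⟨r, by
    rw [hr, zsmul_one, one_zsmul]; norm_num⟩
  refine ⟨ψ.toRingHom.comp e.symm.toRingHom, fun a b ↦ ?_⟩
  have : ψ ⟨a, b⟩ = a + b * r := by
    simp [ψ, QuadraticAlgebra.lift]
  simpa using this

/-- The quintic residue character `y ↦ φ y ^ m`, where `q = 5 * m + 1`, does not see factors that
are fifth powers. -/
lemma char_eq {q m : ℕ} (hq : q.Prime) (hm : q = 5 * m + 1) (φ : O →+* ZMod q) {A B w : O}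
    (h : A = B * w ^ 5) (hA : φ A ^ m ≠ 0) : φ A ^ m = φ B ^ m := by
  have := Fact.mk hq
  have hw : φ w ≠ 0 := by
    intro h0
    have hm0 : m ≠ 0 := by rintro rfl; exact hq.one_lt.ne' hm
    apply hA
    rw [h, map_mul, map_pow, h0, zero_pow (by norm_num), mul_zero, zero_pow hm0]
  have h1 : φ w ^ (5 * m) = 1 := by
    rw [← ZMod.pow_card_sub_one_eq_one hw]; congr 1; omega
  rw [h, map_mul, map_pow, mul_pow, ← pow_mul, h1, mul_one]

lemma five_dvd_of_pow {q : ℕ} {c : ZMod q} (h5 : c ^ 5 = 1) (h1 : c ≠ 1) {i : ℕ} (h : c ^ i = 1) :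
    5 ∣ i := by
  have : orderOf c = 5 := @orderOf_eq_prime _ _ _ _ ⟨Nat.prime_five⟩ h5 h1
  exact this ▸ orderOf_dvd_of_pow_eq_one h

/-- An element of norm `- 3 ^ 15`; it generates the fifteenth power of a prime above `3`. -/
def α : Quad := ⟨951, -4⟩
/-- An element of norm `67 ^ 5`; it generates the fifth power of a prime above `67`. -/
def β : Quad := ⟨55037, 42⟩
/-- A unit of norm `1` that is not a fifth power. -/
def ε : Quad := ⟨501026245282787575, 513469952973264⟩

lemma norm_ε : QuadraticAlgebra.norm ε = 1 := by
  rw [ε, QuadraticAlgebra.norm_def]; norm_num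

variable (e : Quad ≃+* O)

lemma isUnit_ε : IsUnit (e ε) := by
  have : IsUnit ε := by
    rw [QuadraticAlgebra.isUnit_iff_norm_isUnit, norm_ε]; exact isUnit_one
  exact this.map e

/-- The quintic residue character at a prime above `281` detects `α` and is trivial on `β`, `ε`. -/
lemma char281 : ∃ φ : O →+* ZMod 281,
    φ (e α) ^ 56 = 153 ∧ φ (e β) ^ 56 = 1 ∧ φ (e ε) ^ 56 = 1 := by
  obtain ⟨φ, hφ⟩ := exists_hom e 281 92 (by decide +kernel)
  refine ⟨φ, ?_, ?_, ?_⟩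
  · rw [α, hφ]; decide +kernel
  · rw [β, hφ]; decide +kernel
  · rw [ε, hφ]; decide +kernel

/-- The quintic residue character at a prime above `601` detects `β` and is trivial on `α`, `ε`. -/
lemma char601 : ∃ φ : O →+* ZMod 601,
    φ (e α) ^ 120 = 1 ∧ φ (e β) ^ 120 = 314 ∧ φ (e ε) ^ 120 = 1 := by
  obtain ⟨φ, hφ⟩ := exists_hom e 601 243 (by decide +kernel)
  refine ⟨φ, ?_, ?_, ?_⟩
  · rw [α, hφ]; decide +kernel
  · rw [β, hφ]; decide +kernel
  · rw [ε, hφ]; decide +kernel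

/-- The quintic residue character at a prime above `761` is nontrivial on `ε`. -/
lemma ε_not_fifth_power (v : O) : e ε ≠ v ^ 5 := by
  intro h
  obtain ⟨φ, hφ⟩ := exists_hom e 761 232 (by decide +kernel)
  have h1 : φ (e ε) ^ 152 = 684 := by rw [ε, hφ]; decide +kernel
  have h2 := char_eq (m := 152) (by norm_num) (by norm_num) φ (A := e ε) (B := 1) (w := v)
    (by rw [h, one_mul]) (by rw [h1]; decide +kernel)
  rw [h1, map_one, one_pow] at h2
  revert h2
  decide +kernel

lemma five_dvd_of_eq {i j k : ℕ} {w : O}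
    (h : e α ^ i * e β ^ j = e ε ^ k * w ^ 5) : 5 ∣ i ∧ 5 ∣ j := by
  constructor
  · obtain ⟨φ, h1, h2, h3⟩ := char281 e
    have hA : φ (e α ^ i * e β ^ j) ^ 56 = 153 ^ i := by
      rw [map_mul, map_pow, map_pow, mul_pow, ← pow_mul, ← pow_mul, mul_comm i, mul_comm j,
        pow_mul, pow_mul, h1, h2, one_pow, mul_one]
    have hB : φ (e ε ^ k) ^ 56 = 1 := by
      rw [map_pow, ← pow_mul, mul_comm, pow_mul, h3, one_pow]
    have hne : (153 : ZMod 281) ≠ 0 := by decide +kernel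
    have := Fact.mk (show Nat.Prime 281 by norm_num)
    have hc := char_eq (m := 56) (by norm_num) (by norm_num) φ h
      (by rw [hA]; exact pow_ne_zero _ hne)
    rw [hA, hB] at hc
    exact five_dvd_of_pow (by decide +kernel) (by decide +kernel) hc
  · obtain ⟨φ, h1, h2, h3⟩ := char601 e
    have hA : φ (e α ^ i * e β ^ j) ^ 120 = 314 ^ j := by
      rw [map_mul, map_pow, map_pow, mul_pow, ← pow_mul, ← pow_mul, mul_comm i, mul_comm j,
        pow_mul, pow_mul, h1, h2, one_pow, one_mul]
    have hB : φ (e ε ^ k) ^ 120 = 1 := by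
      rw [map_pow, ← pow_mul, mul_comm, pow_mul, h3, one_pow]
    have hne : (314 : ZMod 601) ≠ 0 := by decide +kernel
    have := Fact.mk (show Nat.Prime 601 by norm_num)
    have hc := char_eq (m := 120) (by norm_num) (by norm_num) φ h
      (by rw [hA]; exact pow_ne_zero _ hne)
    rw [hA, hB] at hc
    exact five_dvd_of_pow (by decide +kernel) (by decide +kernel) hc

variable [IsDedekindDomain O]

/-- If the units modulo fifth powers are generated by any unit that is not a fifth power, then
the classes of `P ^ 3` and `R` are independent elements of the `5`-torsion: if `P ^ (3 i) * R ^ j`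
is `(γ)`, then `γ ^ 5` is `α ^ i * β ^ j` up to a unit `ε ^ k * v ^ 5`, so the residue characters
force `5 ∣ i` and `5 ∣ j`. -/
lemma independent (hU : ∀ η : Oˣ, (¬ ∃ v : Oˣ, η = v ^ 5) → ∀ u : Oˣ, ∃ (k : ℕ) (v : Oˣ),
      u = η ^ k * v ^ 5)
    {P R : Ideal O} (hP0 : P ≠ ⊥) (hR0 : R ≠ ⊥) (hP : P ^ 15 = Ideal.span {e α})
    (hR : R ^ 5 = Ideal.span {e β}) {i j : ℕ} (h : (cl P ^ 3) ^ i * cl R ^ j = 1) :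
    5 ∣ i ∧ 5 ∣ j := by
  rw [← pow_mul, ← cl_pow hP0, ← cl_pow hR0, ← cl_mul (pow_ne_zero _ hP0) (pow_ne_zero _ hR0)] at h
  obtain ⟨γ, hγ⟩ := exists_span_of_cl_eq_one h
  have h5 : Ideal.span {γ ^ 5} = Ideal.span {e α ^ i * e β ^ j} := by
    rw [← Ideal.span_singleton_pow, ← hγ, ← Ideal.span_singleton_mul_span_singleton,
      ← Ideal.span_singleton_pow, ← Ideal.span_singleton_pow, ← hP, ← hR]
    ring
  obtain ⟨u, hu⟩ := Ideal.span_singleton_eq_span_singleton.1 h5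
  obtain ⟨η, hη⟩ := isUnit_ε e
  obtain ⟨k, v, hkv⟩ := hU η (by
    rintro ⟨v, rfl⟩
    exact ε_not_fifth_power e v (by rw [← hη]; simp)) u
  apply five_dvd_of_eq e (k := k) (w := γ * v)
  rw [← hu, hkv, ← hη]
  push_cast
  ring

/-- The homomorphism `ℤ/m × ℤ/n → G` determined by `a` and `b` with `a ^ m = b ^ n = 1`. -/
noncomputable def pairHom {G : Type*} [CommGroup G] (m n : ℕ) (a b : G) (ha : a ^ m = 1)
    (hb : b ^ n = 1) : Multiplicative (ZMod m × ZMod n) →* G :=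
  AddMonoidHom.toMultiplicativeLeft (AddMonoidHom.coprod
    (ZMod.lift m ⟨zmultiplesHom (Additive G) (Additive.ofMul a), by
      simp [← ofMul_pow, ha]⟩)
    (ZMod.lift n ⟨zmultiplesHom (Additive G) (Additive.ofMul b), by
      simp [← ofMul_pow, hb]⟩))

lemma pairHom_apply {G : Type*} [CommGroup G] (m n : ℕ) (a b : G) (ha : a ^ m = 1)
    (hb : b ^ n = 1) (i j : ℤ) :
    pairHom m n a b ha hb (Multiplicative.ofAdd ((i : ZMod m), (j : ZMod n))) = a ^ i * b ^ j := by
  simp [pairHom, ZMod.lift_coe]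

variable [Module.Free ℤ O] [Module.Finite ℤ O]

include e in
/-- The classes of the primes above `3` and `67` generate the class group and satisfy
`[P] ^ 15 = [R] ^ 5 = 1`, so its order divides `75`; independence of `[P] ^ 3` and `[R]` embeds
`ℤ/5 × ℤ/5` into it. The hypotheses are the consequences of Dirichlet's unit theorem and of
Minkowski's bound that are used. -/
lemma class_group_structure (hU : ∀ η : Oˣ, (¬ ∃ v : Oˣ, η = v ^ 5) → ∀ u : Oˣ,
      ∃ (k : ℕ) (v : Oˣ), u = η ^ k * v ^ 5)
    (hM : ∀ c : ClassGroup O, ∃ I : Ideal O, I ≠ ⊥ ∧ Ideal.absNorm I ≤ 976 ∧ cl I = c) :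
    (∃ f : Multiplicative (ZMod 5 × ZMod 5) →* ClassGroup O, Function.Injective f) ∧
      Nat.card (ClassGroup O) ∣ 75 := by
  obtain ⟨P, hPp, hP3, hP⟩ := exists_pow_eq_span e (p := 3) (k := 15) Nat.prime_three (by norm_num)
    951 (-4) (by rw [QuadraticAlgebra.norm_def]; norm_num) (by norm_num)
  obtain ⟨R, hRp, hR67, hR⟩ := exists_pow_eq_span e (p := 67) (k := 5) (by norm_num) (by norm_num)
    55037 42 (by rw [QuadraticAlgebra.norm_def]; norm_num) (by norm_num)
  have hP0 := ne_bot_of_mem e (by norm_num) hP3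
  have hR0 := ne_bot_of_mem e (by norm_num) hR67
  have hP15 : cl P ^ 15 = 1 := by rw [← cl_pow hP0, hP, cl_span]
  have hR5 : cl R ^ 5 = 1 := by rw [← cl_pow hR0, hR, cl_span]
  have hP5 : (cl P ^ 3) ^ 5 = 1 := by rw [← pow_mul]; exact hP15
  constructor
  · refine ⟨pairHom 5 5 (cl P ^ 3) (cl R) hP5 hR5, ?_⟩
    rw [injective_iff_map_eq_one]
    intro x hx
    obtain ⟨⟨i, j⟩, rfl⟩ := Multiplicative.ofAdd.surjective x
    obtain ⟨i, rfl⟩ := ZMod.natCast_zmod_surjective i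
    obtain ⟨j, rfl⟩ := ZMod.natCast_zmod_surjective j
    have h := pairHom_apply 5 5 (cl P ^ 3) (cl R) hP5 hR5 i j
    simp only [Int.cast_natCast, zpow_natCast] at h
    rw [h] at hx
    obtain ⟨h1, h2⟩ := independent e hU hP0 hR0 hP hR hx
    rw [(ZMod.natCast_eq_zero_iff i 5).2 h1, (ZMod.natCast_eq_zero_iff j 5).2 h2]
    rfl
  · set g := pairHom 15 5 (cl P) (cl R) hP15 hR5 with hg
    have hPH : cl P ∈ g.range := ⟨_, by
      have := pairHom_apply 15 5 (cl P) (cl R) hP15 hR5 1 0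
      rwa [zpow_one, zpow_zero, mul_one] at this⟩
    have hRH : cl R ∈ g.range := ⟨_, by
      have := pairHom_apply 15 5 (cl P) (cl R) hP15 hR5 0 1
      rwa [zpow_one, zpow_zero, one_mul] at this⟩
    have hsurj : Function.Surjective g := by
      intro c
      obtain ⟨I, hI0, hIn, rfl⟩ := hM c
      exact cl_mem_of_absNorm_le e g.range (good_of_mem e _ Nat.prime_three hPp hP3 hPH)
        (good_of_mem e _ (by norm_num) hRp hR67 hRH) I hI0 hIn
    have := Subgroup.card_dvd_of_surjective g hsurj
    simpa [Nat.card_prod] using this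

end LowerBound

/-! ### The Sylow subgroup -/

section Sylow

/-- In a commutative group of order dividing `75`, a copy of `ℤ/5 × ℤ/5` is the Sylow
`5`-subgroup. -/
lemma sylow_equiv {G : Type*} [CommGroup G] (hG : Nat.card G ∣ 75)
    (f : Multiplicative (ZMod 5 × ZMod 5) →* G) (hf : Function.Injective f) :
    25 ∣ Nat.card G ∧ ∀ P : Sylow 5 G, Nonempty (P ≃* Multiplicative (ZMod 5 × ZMod 5)) := by
  have := Fact.mk Nat.prime_five
  have hfin : Finite G := Nat.finite_of_card_ne_zero (fun h ↦ by rw [h] at hG; norm_num at hG)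
  have hcard : Nat.card f.range = 25 := by
    rw [← Nat.card_congr (MonoidHom.ofInjective hf).toEquiv]
    simp
  have h25 : 25 ∣ Nat.card G := hcard ▸ Subgroup.card_subgroup_dvd_card f.range
  refine ⟨h25, fun P ↦ ?_⟩
  have hle : f.range ≤ P := by
    have hp : IsPGroup 5 f.range := IsPGroup.of_card (n := 2) (by rw [hcard]; norm_num)
    obtain ⟨Q, hQ⟩ := hp.exists_le_sylow
    have : Subsingleton (Sylow 5 G) := Sylow.unique_of_normal P inferInstance |>.instSubsingleton
    rwa [Subsingleton.elim P Q]
  have hPcard : Nat.card P = 25 := by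
    obtain ⟨n, hn⟩ := IsPGroup.iff_card.1 P.isPGroup'
    have h1 : Nat.card P ∣ 75 := (Subgroup.card_subgroup_dvd_card (P : Subgroup G)).trans hG
    have h2 : 25 ∣ Nat.card P := hcard ▸ Subgroup.card_dvd_of_le hle
    have h3 : ¬ 3 ∣ Nat.card P := by
      rw [hn]
      intro h
      have := Nat.prime_three.dvd_of_dvd_pow h
      norm_num at this
    obtain ⟨k, hk⟩ := h2
    rw [hk] at h1 h3 ⊢
    have h4 : k ∣ 3 := Nat.dvd_of_mul_dvd_mul_left (by norm_num : 0 < 25) h1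
    rcases (Nat.dvd_prime Nat.prime_three).1 h4 with rfl | rfl
    · rfl
    · norm_num at h3
  have heq : f.range = P := Subgroup.eq_of_le_of_card_ge hle (by rw [hcard]; exact hPcard.le)
  exact ⟨(MulEquiv.subgroupCongr heq.symm).trans (MonoidHom.ofInjective hf).symm⟩

end Sylow

/-! ### The field `ℚ(√3812377)`: integers, discriminant, units, Minkowski bound -/

section Field

open NumberField

variable {K : Type*} [Field K] [NumberField K]

/-- The model `ℚ(ω)` of the field, with `ω ^ 2 = 953094 + ω`. -/
abbrev QuadQ : Type := QuadraticAlgebra ℚ 953094 1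

/-- As `3812377` is squarefree, a rational `v` with `3812377 * v ^ 2` an integer is an integer. -/
lemma int_of_sq_eq (v : ℚ) (k : ℤ) (h : 3812377 * v ^ 2 = k) : ∃ m : ℤ, v = m := by
  have h1 : (3812377 * v) ^ 2 = ((3812377 * k : ℤ) : ℚ) := by
    push_cast; linear_combination 3812377 * h
  have h2 : IsIntegral ℤ (3812377 * v) := by
    apply IsIntegral.of_pow (n := 2) (by norm_num)
    rw [h1]
    exact isIntegral_algebraMap (R := ℤ) (A := ℚ) (x := 3812377 * k)
  obtain ⟨m, hm⟩ := IsIntegrallyClosed.isIntegral_iff.1 h2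
  rw [eq_intCast] at hm
  have h3 : m ^ 2 = 3812377 * k := by
    rw [← hm] at h1; exact_mod_cast h1
  have p1 : Prime (991 : ℤ) := Nat.prime_iff_prime_int.1 (by norm_num)
  have p2 : Prime (3847 : ℤ) := Nat.prime_iff_prime_int.1 (by norm_num)
  have d1 : (991 : ℤ) ∣ m := p1.dvd_of_dvd_pow (n := 2) ⟨3847 * k, by rw [h3]; ring⟩
  have d2 : (3847 : ℤ) ∣ m := p2.dvd_of_dvd_pow (n := 2) ⟨991 * k, by rw [h3]; ring⟩
  have d3 : (3812377 : ℤ) ∣ m := by omega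
  obtain ⟨c, rfl⟩ := d3
  refine ⟨c, ?_⟩
  push_cast at hm
  linarith

lemma parity (t v n : ℤ) (h : t ^ 2 - 4 * n = 3812377 * v ^ 2) : ∃ u : ℤ, t = 2 * u + v := by
  have h2 : Even ((t - v) * (t + v)) := ⟨2 * n + 2 * 953094 * v ^ 2, by linear_combination h⟩
  have h3 : Even (t - v) := by
    rcases Int.even_mul.1 h2 with h | h
    · exact h
    · have : t - v = (t + v) - 2 * v := by ring
      rw [this]; exact h.sub (even_two_mul v)
  obtain ⟨u, hu⟩ := h3
  exact ⟨u, by linarith⟩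

/-- `3812377` is not a rational square. -/
lemma not_sq (t v : ℚ) (h : t ^ 2 = 3812377 * v ^ 2) : v = 0 := by
  by_contra hv
  have h1 : (t / v) ^ 2 = 3812377 := by field_simp; linarith
  have h2 : IsIntegral ℤ (t / v) := by
    apply IsIntegral.of_pow (n := 2) (by norm_num)
    rw [h1]
    exact isIntegral_algebraMap (R := ℤ) (A := ℚ) (x := 3812377)
  obtain ⟨m, hm⟩ := IsIntegrallyClosed.isIntegral_iff.1 h2
  rw [eq_intCast] at hm
  rw [← hm] at h1
  have h3 : m ^ 2 = 3812377 := by exact_mod_cast h1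
  have h4 : m.natAbs ^ 2 = 3812377 := by
    have := congrArg Int.natAbs h3
    rwa [Int.natAbs_pow] at this
  have : m.natAbs < 1953 := by nlinarith
  have : 1952 < m.natAbs := by
    by_contra hh
    have := Nat.pow_le_pow_left (not_lt.1 hh) 2
    omega
  omega

/-- The integers of `ℚ(ω)` are `ℤ[ω]`: trace and norm of `u + v ω` are integers, and
`trace ^ 2 - 4 * norm = 3812377 * v ^ 2`. -/
lemma integral_coords (x : QuadQ) (hx : IsIntegral ℤ x) : ∃ a b : ℤ, x = ⟨a, b⟩ := by
  have hs : IsIntegral ℤ (star x) := hx.map (starRingEnd QuadQ).toIntAlgHom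
  have ht : IsIntegral ℤ (QuadraticAlgebra.trace x) := by
    rw [← isIntegral_algebraMap_iff (B := QuadQ) QuadraticAlgebra.algebraMap_injective,
      QuadraticAlgebra.algebraMap_trace_eq_add_star]
    exact hx.add hs
  have hn : IsIntegral ℤ (QuadraticAlgebra.norm x) := by
    rw [← isIntegral_algebraMap_iff (B := QuadQ) QuadraticAlgebra.algebraMap_injective,
      QuadraticAlgebra.algebraMap_norm_eq_mul_star]
    exact hx.mul hs
  obtain ⟨t, ht⟩ := IsIntegrallyClosed.isIntegral_iff.1 ht
  obtain ⟨n, hn⟩ := IsIntegrallyClosed.isIntegral_iff.1 hn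
  obtain ⟨u, v⟩ := x
  rw [eq_intCast, QuadraticAlgebra.trace_def] at ht
  rw [eq_intCast, QuadraticAlgebra.norm_def] at hn
  simp only at ht hn
  have h1 : 3812377 * v ^ 2 = ((t ^ 2 - 4 * n : ℤ) : ℚ) := by
    push_cast; rw [ht, hn]; ring
  obtain ⟨b, rfl⟩ := int_of_sq_eq v _ h1
  obtain ⟨a, rfl⟩ := parity t b n (by exact_mod_cast h1.symm)
  refine ⟨a, b, ?_⟩
  have : u = a := by push_cast at ht; linarith
  rw [this]

lemma exists_sqrt (h : IsSplittingField ℚ K (X ^ 2 - 3812377)) : ∃ s : K, s ^ 2 = 3812377 := by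
  have hs := h.splits
  have hdeg : (X ^ 2 - 3812377 : ℚ[X]).degree = 2 := by
    have : (3812377 : ℚ[X]) = C 3812377 := rfl
    rw [this]; compute_degree!
  obtain ⟨s, hs⟩ := hs.exists_eval_eq_zero (by rw [degree_map, hdeg]; norm_num)
  refine ⟨s, ?_⟩
  simp at hs
  linear_combination hs

lemma exists_algEquiv (h : IsSplittingField ℚ K (X ^ 2 - 3812377)) :
    Nonempty (QuadQ ≃ₐ[ℚ] K) := by
  obtain ⟨s, hs⟩ := exists_sqrt h
  let ψ : QuadQ →ₐ[ℚ] K := QuadraticAlgebra.lift ⟨(1 + s) / 2, by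
    rw [one_smul, Algebra.smul_def, map_ofNat]
    linear_combination (1 / 4) * hs⟩
  have hψ : ∀ a b : ℚ, ψ ⟨a, b⟩ = a + b * ((1 + s) / 2) := by
    intro a b
    simp [ψ, QuadraticAlgebra.lift, Algebra.smul_def]
  have hinj : Function.Injective ψ := by
    rw [injective_iff_map_eq_zero]
    intro x hx
    have h1 : ψ (algebraMap ℚ QuadQ (QuadraticAlgebra.norm x)) = 0 := by
      rw [QuadraticAlgebra.algebraMap_norm_eq_mul_star, map_mul, hx, zero_mul]
    rw [AlgHom.commutes, map_eq_zero] at h1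
    obtain ⟨u, v⟩ := x
    rw [QuadraticAlgebra.norm_def] at h1
    simp only at h1
    have hv := not_sq (2 * u + v) v (by linear_combination 4 * h1)
    subst hv
    have hu : u = 0 := by simpa using h1
    subst hu
    rfl
  have hsurj : Function.Surjective ψ := by
    rw [← AlgHom.range_eq_top, eq_top_iff, ← h.adjoin_rootSet, Algebra.adjoin_le_iff]
    intro ρ hρ
    have h1 := Polynomial.aeval_eq_zero_of_mem_rootSet hρ
    rw [map_sub, map_pow, aeval_X, map_ofNat] at h1
    have h2 : (ρ - s) * (ρ + s) = 0 := by linear_combination h1 - hs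
    rcases mul_eq_zero.1 h2 with h3 | h3
    · exact ⟨⟨-1, 2⟩, by
        change ψ _ = _
        rw [hψ]; push_cast; linear_combination -h3⟩
    · exact ⟨⟨1, -2⟩, by
        change ψ _ = _
        rw [hψ]; push_cast; linear_combination -h3⟩
  exact ⟨AlgEquiv.ofBijective ψ ⟨hinj, hsurj⟩⟩

lemma exists_ringEquiv (ψ : QuadQ ≃ₐ[ℚ] K) : Nonempty (Quad ≃+* 𝓞 K) := by
  have hω : ∀ a b : ℤ, ψ ⟨a, b⟩ = a + b * ψ ⟨0, 1⟩ := by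
    intro a b
    rw [← map_intCast ψ, ← map_intCast ψ, ← map_mul, ← map_add]
    congr 1
    ext <;> simp
  have hint : IsIntegral ℤ (⟨0, 1⟩ : QuadQ) := by
    refine ⟨X ^ 2 - X - C 953094, by monicity!, ?_⟩
    simp only [sq, eval₂_sub, eval₂_mul, eval₂_X, map_ofNat]
    ext <;> simp [QuadraticAlgebra.re_ofNat, QuadraticAlgebra.im_ofNat]
  let w : 𝓞 K := ⟨ψ ⟨0, 1⟩, hint.map (ψ.toRingHom.toIntAlgHom)⟩
  have hw : w * w = 953094 + w := by
    apply RingOfIntegers.ext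
    change ψ ⟨0, 1⟩ * ψ ⟨0, 1⟩ = algebraMap (𝓞 K) K (953094 + w)
    rw [map_add, map_ofNat]
    change _ = _ + ψ ⟨0, 1⟩
    rw [← map_ofNat ψ, ← map_mul, ← map_add]
    congr 1
    ext <;> simp [QuadraticAlgebra.re_ofNat, QuadraticAlgebra.im_ofNat]
  let φ : Quad →ₐ[ℤ] 𝓞 K := QuadraticAlgebra.lift ⟨w, by
    rw [hw, zsmul_one, one_zsmul]; norm_num⟩
  have hφ : ∀ a b : ℤ, algebraMap (𝓞 K) K (φ ⟨a, b⟩) = ψ ⟨a, b⟩ := by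
    intro a b
    have : φ ⟨a, b⟩ = a + b * w := by simp [φ, QuadraticAlgebra.lift]
    rw [this, hω, map_add, map_mul, map_intCast, map_intCast]
    rfl
  refine ⟨RingEquiv.ofBijective φ ⟨?_, ?_⟩⟩
  · rintro ⟨a, b⟩ ⟨a', b'⟩ hab
    have h1 := congrArg (algebraMap (𝓞 K) K) hab
    rw [hφ, hφ] at h1
    have h2 := ψ.injective h1
    simp only [QuadraticAlgebra.mk.injEq, Int.cast_inj] at h2
    rw [h2.1, h2.2]
  · intro y
    have hy : IsIntegral ℤ (ψ.symm (y : K)) :=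
      (RingOfIntegers.isIntegral_coe y).map (ψ.symm.toRingEquiv.toRingHom.toIntAlgHom)
    obtain ⟨a, b, hab⟩ := integral_coords _ hy
    refine ⟨⟨a, b⟩, ?_⟩
    apply RingOfIntegers.ext
    exact (hφ a b).trans (by rw [← hab, AlgEquiv.apply_symm_apply])

lemma trace_quad (x : Quad) : Algebra.trace ℤ Quad x = 2 * x.re + x.im := by
  rw [Algebra.trace_eq_matrix_trace (QuadraticAlgebra.basis (953094 : ℤ) 1), Matrix.trace_fin_two,
    Algebra.leftMulMatrix_eq_repr_mul, Algebra.leftMulMatrix_eq_repr_mul]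
  have h0 : QuadraticAlgebra.basis (953094 : ℤ) 1 0 = ⟨1, 0⟩ := by
    apply (QuadraticAlgebra.basis (953094 : ℤ) 1).repr.injective
    ext i; fin_cases i <;> simp
  have h1 : QuadraticAlgebra.basis (953094 : ℤ) 1 1 = ⟨0, 1⟩ := by
    apply (QuadraticAlgebra.basis (953094 : ℤ) 1).repr.injective
    ext i; fin_cases i <;> simp
  rw [h0, h1]
  simp
  ring

lemma discr_eq (e : Quad ≃+* 𝓞 K) : NumberField.discr K = 3812377 := by
  let f : Quad ≃ₐ[ℤ] 𝓞 K := AlgEquiv.ofRingEquiv (f := e) (fun n ↦ by simp)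
  let b := QuadraticAlgebra.basis (953094 : ℤ) 1
  rw [← NumberField.discr_eq_discr K (b.map f.toLinearEquiv)]
  have : (b.map f.toLinearEquiv : Fin 2 → 𝓞 K) = f ∘ b := by ext i; simp
  rw [this, ← Algebra.discr_eq_discr_of_algEquiv b f, Algebra.discr_def, Matrix.det_fin_two]
  have h0 : b 0 = ⟨1, 0⟩ := by
    apply b.repr.injective
    ext i; fin_cases i <;> simp [b]
  have h1 : b 1 = ⟨0, 1⟩ := by
    apply b.repr.injective
    ext i; fin_cases i <;> simp [b]
  simp only [Algebra.traceMatrix_apply, Algebra.traceForm_apply, h0, h1, trace_quad]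
  simp

variable (K) in
lemma nrComplexPlaces_eq (hd : NumberField.discr K = 3812377) (hr : Module.finrank ℚ K = 2) :
    InfinitePlace.nrComplexPlaces K = 0 := by
  have h1 := NumberField.sign_discr K
  have h2 := InfinitePlace.card_add_two_mul_card_eq_rank K
  rw [hr] at h2
  rw [hd] at h1
  have : InfinitePlace.nrComplexPlaces K ≤ 1 := by omega
  interval_cases h : InfinitePlace.nrComplexPlaces K
  · rfl
  · simp at h1

/-- A field with a real place has no roots of unity other than `± 1`. -/
lemma torsion_sq (hr : 0 < InfinitePlace.nrRealPlaces K) (x : Units.torsion K) :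
    (x : (𝓞 K)ˣ) ^ 2 = 1 := by
  by_cases! hc : 2 < orderOf (x : (𝓞 K)ˣ)
  · rw [← orderOf_units, ← orderOf_injective (algebraMap (𝓞 K) K : 𝓞 K →* K)
      RingOfIntegers.coe_injective] at hc
    have h0 := InfinitePlace.IsPrimitiveRoot.nrRealPlaces_eq_zero_of_two_lt hc
      (IsPrimitiveRoot.orderOf (algebraMap (𝓞 K) K (x.1 : 𝓞 K)))
    omega
  · apply orderOf_dvd_iff_pow_eq_one.1
    have := orderOf_pos_iff.2 ((CommGroup.mem_torsion x.1).1 x.2)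
    interval_cases orderOf (x : (𝓞 K)ˣ) <;> norm_num

/-- Modulo fifth powers, the unit group of a real quadratic field is generated by any unit
that is not itself a fifth power. -/
lemma units_mod_fifth (hc : InfinitePlace.nrComplexPlaces K = 0) (hr : Module.finrank ℚ K = 2)
    (η : (𝓞 K)ˣ) (hη : ¬ ∃ v : (𝓞 K)ˣ, η = v ^ 5) (u : (𝓞 K)ˣ) :
    ∃ (k : ℕ) (v : (𝓞 K)ˣ), u = η ^ k * v ^ 5 := by
  have h2 := InfinitePlace.card_add_two_mul_card_eq_rank K
  have hreal : InfinitePlace.nrRealPlaces K = 2 := by omega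
  have hrank : Units.rank K = 1 := by
    rw [Units.rank, InfinitePlace.card_eq_nrRealPlaces_add_nrComplexPlaces, hreal, hc]
  -- `θ` is a fundamental unit
  obtain ⟨θ, hθ⟩ : ∃ θ : (𝓞 K)ˣ, ∀ x : (𝓞 K)ˣ, ∃ (ζ : (𝓞 K)ˣ) (n : ℤ),
      ζ ^ 2 = 1 ∧ x = ζ * θ ^ n := by
    refine ⟨Units.fundSystem K ⟨0, by omega⟩, fun x ↦ ?_⟩
    obtain ⟨⟨ζ, n⟩, hx, -⟩ := Units.exist_unique_eq_mul_prod K x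
    refine ⟨ζ, n ⟨0, by omega⟩, torsion_sq (by omega) ζ, ?_⟩
    rw [hx]
    congr 1
    apply Fintype.prod_eq_single
    intro i hi
    exact absurd (Fin.ext (by have := i.2; simp; omega)) hi
  have hζ5 : ∀ ζ : (𝓞 K)ˣ, ζ ^ 2 = 1 → ζ = ζ ^ 5 := by
    intro ζ h
    calc ζ = (ζ ^ 2) ^ 2 * ζ := by rw [h]; simp
      _ = ζ ^ 5 := by rw [← pow_mul, ← pow_succ]
  obtain ⟨ζ, m, hζ, hηm⟩ := hθ η
  obtain ⟨ξ, n, hξ, hun⟩ := hθ u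
  have hm : ¬ (5 : ℤ) ∣ m := by
    rintro ⟨c, rfl⟩
    apply hη
    refine ⟨ζ * θ ^ c, ?_⟩
    rw [mul_pow, ← hζ5 ζ hζ, ← zpow_natCast, ← zpow_mul, mul_comm c]
    exact hηm
  -- solve `m * k ≡ n` modulo `5`
  obtain ⟨k, c, hk⟩ : ∃ (k : ℕ) (c : ℤ), n = m * k + 5 * c := by
    have : ∃ k : ℕ, (5 : ℤ) ∣ n - m * k := by
      have h5 : m % 5 = 1 ∨ m % 5 = 2 ∨ m % 5 = 3 ∨ m % 5 = 4 := by omega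
      rcases h5 with h | h | h | h
      · exact ⟨(n % 5).toNat, by rw [Int.toNat_of_nonneg (by omega)]; exact Int.ModEq.dvd (by
          change _ % _ = _ % _; rw [Int.mul_emod, h]; omega)⟩
      · exact ⟨(3 * n % 5).toNat, by rw [Int.toNat_of_nonneg (by omega)]; exact Int.ModEq.dvd (by
          change _ % _ = _ % _; rw [Int.mul_emod, h]; omega)⟩
      · exact ⟨(2 * n % 5).toNat, by rw [Int.toNat_of_nonneg (by omega)]; exact Int.ModEq.dvd (by
          change _ % _ = _ % _; rw [Int.mul_emod, h]; omega)⟩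
      · exact ⟨(4 * n % 5).toNat, by rw [Int.toNat_of_nonneg (by omega)]; exact Int.ModEq.dvd (by
          change _ % _ = _ % _; rw [Int.mul_emod, h]; omega)⟩
    obtain ⟨k, c, hc⟩ := this
    exact ⟨k, c, by linarith⟩
  refine ⟨k, ξ * (ζ ^ k)⁻¹ * θ ^ c, ?_⟩
  have hζk : (ζ ^ k) ^ 5 = ζ ^ k := by rw [← pow_mul, mul_comm, pow_mul, ← hζ5 ζ hζ]
  rw [hun, hηm, mul_pow, mul_pow, mul_pow, inv_pow, hζk, ← hζ5 ξ hξ, hk, zpow_add, zpow_mul,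
    zpow_natCast, mul_comm 5 c, zpow_mul]
  norm_cast
  calc _ = (ζ ^ k * (ζ ^ k)⁻¹) * (ξ * ((θ ^ m) ^ k * (θ ^ c) ^ 5)) := by
        rw [mul_inv_cancel, one_mul]
    _ = _ := by ac_rfl

/-- Minkowski's bound is `√3812377 / 2 < 977`. -/
lemma minkowski (hd : NumberField.discr K = 3812377)
    (hc : InfinitePlace.nrComplexPlaces K = 0) (hr : Module.finrank ℚ K = 2)
    (c : ClassGroup (𝓞 K)) :
    ∃ I : Ideal (𝓞 K), I ≠ ⊥ ∧ Ideal.absNorm I ≤ 976 ∧ cl I = c := by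
  obtain ⟨I, hI, hn⟩ := NumberField.exists_ideal_in_class_of_norm_le c
  have hI0 : (I : Ideal (𝓞 K)) ≠ ⊥ := nonZeroDivisors.ne_zero I.2
  refine ⟨I, hI0, ?_, by rw [cl, dif_neg hI0]; exact hI⟩
  rw [hd, hc, hr, pow_zero, one_mul] at hn
  have hs : √|((3812377 : ℤ) : ℝ)| < 1954 := by
    rw [Real.sqrt_lt' (by norm_num)]
    norm_num
  have h1 : (Ideal.absNorm (I : Ideal (𝓞 K)) : ℝ) < 977 := by
    refine hn.trans_lt ?_
    norm_num [Nat.factorial] at hs ⊢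
    linarith
  have : Ideal.absNorm (I : Ideal (𝓞 K)) < 977 := by exact_mod_cast h1
  omega

end Field
end QuadField

/-- let `K = ℚ(√3812377)` (the splitting field over `ℚ` of `X² - 3812377`)
be the real quadratic field with fundamental discriminant `d = 3812377 = 991·3847`.  Then
the `5`-primary part (Sylow `5`-subgroup) of the ideal class group of the ring of integers
of `K` is isomorphic to `(ℤ/5ℤ) × (ℤ/5ℤ)`; in particular the class number of `K` is
divisible by `25`. -/
theorem five_class_group_of_Q_sqrt_3812377 (K : Type) [Field K] [NumberField K]
    (h : IsSplittingField ℚ K (X ^ 2 - 3812377)) :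
    NumberField.discr K = 3812377 ∧
    (3812377 = 991 * 3847) ∧
    (∀ P : Sylow 5 (ClassGroup (NumberField.RingOfIntegers K)),
      Nonempty (P ≃* Multiplicative (ZMod 5 × ZMod 5))) ∧
    25 ∣ NumberField.classNumber K := by
  obtain ⟨ψ⟩ := QuadField.exists_algEquiv h
  obtain ⟨e⟩ := QuadField.exists_ringEquiv ψ
  have hr : Module.finrank ℚ K = 2 := by
    rw [← ψ.toLinearEquiv.finrank_eq, QuadraticAlgebra.finrank_eq_two]
  have hd := QuadField.discr_eq e
  have hc := QuadField.nrComplexPlaces_eq K hd hr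
  obtain ⟨⟨f, hf⟩, h75⟩ := QuadField.class_group_structure e (QuadField.units_mod_fifth hc hr)
    (QuadField.minkowski hd hc hr)
  obtain ⟨h25, hP⟩ := QuadField.sylow_equiv h75 f hf
  refine ⟨hd, by norm_num, hP, ?_⟩
  rwa [Nat.card_eq_fintype_card] at h25
end
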